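/- arXiv:math/0509157 — 5 statements merged into one kernel-verified Lean document; each statement's English description precedes it below -/
import Mathlib

section
/- For a variable x and positive integers n, k, the determinant of the matrix indexed by compositions α, β of n into k non-negative parts, with entry ∏_{i=1}^k binom(x+α_i+β_i, β_i), equals (∏_{i=0}^{n-1} (kx+n+k+i)^{binom(k+i-1,k-1)}) / (∏_{i=1}^{n} i^{binom(n+k-i-1,k-1)}). -/
open Finset

/-- The polynomial binomial coefficient `y(y-1)⋯(y-m+1)/m!`. -/
noncomputable def bch {F : Type*} [Field F] (y : F) (m : ℕ) : F :=
  (∏ j ∈ Finset.range m, (y - (j : F))) / (m.factorial : F)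

/-- Compositions of `n` into `k` non-negative parts. -/
abbrev Comp (n k : ℕ) := {f : Fin k → Fin (n + 1) // ∑ i, (f i : ℕ) = n}

/-- Compositions of `n` into `k` strictly positive parts. -/
abbrev CompPos (n k : ℕ) :=
  {f : Fin k → Fin (n + 1) // (∑ i, (f i : ℕ)) = n ∧ ∀ i, 0 < (f i : ℕ)}

/-!
Row `α` of the matrix lists the coefficients of `L (X ^ α)`, where `L p` is the coefficient of
`z ^ n` in `p (1 / (1 - X_i z)) * ∏ i, (1 - X_i z) ^ (-(x + 1))`. Fix an index `0`. Since
`1 / (1 - X_i z) - 1 / (1 - X_0 z) = (X_i - X_0) z / ((1 - X_i z) (1 - X_0 z))`, the operator `L`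
sends `X_0 ^ γ_0 * ∏ i ≠ 0, (X_i - X_0) ^ γ_i` to `∏ i ≠ 0, (X_i - X_0) ^ γ_i` times a form of
degree `γ_0`, so `L` is triangular in this basis. The diagonal entry is found by setting every
variable in that form equal to `1`: it is the coefficient of `z ^ γ_0` in
`(1 - z) ^ (-(k (x + 1) + 2 n - γ_0))`, namely the binomial coefficient of `k (x + 1) + 2 n - 1`
over `γ_0`. Counting the compositions with `γ_0 > j` turns the product of these into the stated
formula.
-/

theorem det_eq_prod_diag_of_forall_le {m R α : Type*} [Fintype m] [DecidableEq m] [CommRing R]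
    [LinearOrder α] {M : Matrix m m R} (b : m → α)
    (h : ∀ i j, i ≠ j → b j ≤ b i → M i j = 0) : M.det = ∏ i, M i i := by
  have block_det (a : α) : (M.toSquareBlock b a).det = ∏ i with b i = a, M i i := by
    have : M.toSquareBlock b a = Matrix.diagonal fun i => M i.1 i.1 := by
      ext i j
      obtain rfl | hij := eq_or_ne i j
      · simp [Matrix.toSquareBlock_def]
      · rw [Matrix.diagonal_apply_ne _ hij]
        exact h i j (Subtype.coe_ne_coe.2 hij) (j.2.trans i.2.symm).le
    rw [this, Matrix.det_diagonal, ← prod_subtype_eq_prod_filter]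
    simp
  have triangular : M.BlockTriangular b := fun i j hij =>
    h i j (ne_of_apply_ne b hij.ne') hij.le
  rw [triangular.det, prod_congr rfl fun a _ => block_det a,
    prod_fiberwise_of_maps_to fun i _ => mem_image_of_mem b (mem_univ i)]

section Exponents

variable {σ : Type*} [Fintype σ] [DecidableEq σ] {n : ℕ}

/-- The exponents of the monomials of degree `n` in the variables `σ`, that is, the compositions of
`n` into non-negative parts indexed by `σ`. -/
abbrev Exponents (σ : Type*) [Fintype σ] [DecidableEq σ] (n : ℕ) : Type _ :=
  (univ : Finset σ).finsuppAntidiag n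

theorem mem_finsuppAntidiag_univ_iff_degree {s : σ →₀ ℕ} :
    s ∈ (univ : Finset σ).finsuppAntidiag n ↔ s.degree = n := by
  simp [mem_finsuppAntidiag, Finsupp.degree_eq_sum]

theorem Exponents.degree_eq (γ : Exponents σ n) : γ.1.degree = n :=
  mem_finsuppAntidiag_univ_iff_degree.1 γ.2

theorem filter_le_apply_finsuppAntidiag (i₀ : σ) {c : ℕ} (hc : c ≤ n) :
    {s ∈ (univ : Finset σ).finsuppAntidiag n | c ≤ s i₀} =
      ((univ : Finset σ).finsuppAntidiag (n - c)).map
        (addRightEmbedding (Finsupp.single i₀ c)) := by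
  ext s
  simp only [mem_filter, mem_map, mem_finsuppAntidiag_univ_iff_degree, addRightEmbedding_apply]
  constructor
  · rintro ⟨hs, hcs⟩
    have split : s - Finsupp.single i₀ c + Finsupp.single i₀ c = s :=
      tsub_add_cancel_of_le (Finsupp.single_le_iff.2 hcs)
    have degree_split := congrArg Finsupp.degree split
    rw [map_add, Finsupp.degree_single] at degree_split
    exact ⟨_, by omega, split⟩
  · rintro ⟨t, ht, rfl⟩
    simp only [map_add, Finsupp.degree_single, Finsupp.add_apply, Finsupp.single_eq_same]
    omega

theorem card_exponents_le_apply (i₀ : σ) {c : ℕ} (hc : c ≤ n) :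
    #{γ : Exponents σ n | c ≤ γ.1 i₀} =
      (n - c + (Fintype.card σ - 1)).choose (Fintype.card σ - 1) := by
  have card_pos : 0 < Fintype.card σ := Fintype.card_pos_iff.2 ⟨i₀⟩
  rw [univ_eq_attach, filter_attach (fun s : σ →₀ ℕ => c ≤ s i₀), card_map, card_attach,
    filter_le_apply_finsuppAntidiag i₀ hc, card_map, card_finsuppAntidiag_nat_eq_choose, card_univ,
    ← Nat.choose_symm_add]
  congr 1
  omega

theorem prod_exponents_prod_range {M : Type*} [CommMonoid M] (i₀ : σ) (f : ℕ → M) :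
    ∏ γ : Exponents σ n, ∏ j ∈ range (γ.1 i₀), f j =
      ∏ j ∈ range n,
        f j ^ (n - (j + 1) + (Fintype.card σ - 1)).choose (Fintype.card σ - 1) := by
  have apply_le (γ : Exponents σ n) : γ.1 i₀ ≤ n :=
    (Finsupp.le_degree i₀ γ.1).trans_eq γ.degree_eq
  have extend (γ : Exponents σ n) :
      ∏ j ∈ range (γ.1 i₀), f j = ∏ j ∈ range n, if j + 1 ≤ γ.1 i₀ then f j else 1 := by
    rw [← prod_filter]
    congr 1
    ext j
    have := apply_le γ
    simp only [mem_filter, mem_range]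
    omega
  simp only [extend]
  rw [prod_comm]
  refine prod_congr rfl fun j hj => ?_
  rw [← prod_filter, prod_const, card_exponents_le_apply i₀ (mem_range.1 hj)]

end Exponents

section HomogMatrix

open MvPolynomial

variable {σ R : Type*} [Fintype σ]

theorem monomial_one_eq_prod_X_pow [CommSemiring R] (s : σ →₀ ℕ) :
    monomial s (1 : R) = ∏ i, X i ^ s i := by
  rw [monomial_eq, C_1, one_mul, Finsupp.prod_fintype _ _ fun i => pow_zero _]

variable [DecidableEq σ] {n : ℕ}

theorem sum_exponents_monomial_coeff [CommSemiring R] {p : MvPolynomial σ R}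
    (hp : p.IsHomogeneous n) : ∑ γ : Exponents σ n, monomial γ.1 (coeff γ.1 p) = p := by
  rw [sum_coe_sort (univ.finsuppAntidiag n) fun s => monomial s (coeff s p)]
  conv_rhs => rw [p.as_sum]
  refine (sum_subset (fun s hs => ?_) fun s _ hs => ?_).symm
  · rw [mem_finsuppAntidiag_univ_iff_degree]
    exact (hp.degree_eq_sum_deg_support hs).symm
  · rw [notMem_support_iff.1 hs, monomial_zero]

/-- The matrix, in the monomial basis, of the degree `n` homogeneous component of an endomorphism of
the space of polynomials. Row `α` lists the coefficients of the image of the monomial `α`, so that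
composition reverses the order of the factors. -/
noncomputable def homogMatrix [CommSemiring R] (n : ℕ)
    (L : MvPolynomial σ R →ₗ[R] MvPolynomial σ R) : Matrix (Exponents σ n) (Exponents σ n) R :=
  Matrix.of fun α β => coeff β.1 (L (monomial α.1 1))

theorem homogMatrix_comp [CommSemiring R] (L' : MvPolynomial σ R →ₗ[R] MvPolynomial σ R)
    {L : MvPolynomial σ R →ₗ[R] MvPolynomial σ R}
    (hL : ∀ p, p.IsHomogeneous n → (L p).IsHomogeneous n) :
    homogMatrix n (L' ∘ₗ L) = homogMatrix n L * homogMatrix n L' := by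
  ext α β
  have expand : L' (L (monomial α.1 1)) =
      ∑ γ : Exponents σ n, coeff γ.1 (L (monomial α.1 1)) • L' (monomial γ.1 1) := by
    conv_lhs =>
      rw [← sum_exponents_monomial_coeff (hL _ (isHomogeneous_monomial 1 α.degree_eq))]
    rw [map_sum]
    refine sum_congr rfl fun γ _ => ?_
    rw [← map_smul, smul_monomial, smul_eq_mul, mul_one]
  simp only [homogMatrix, Matrix.mul_apply, Matrix.of_apply, LinearMap.comp_apply, expand,
    coeff_sum, coeff_smul, smul_eq_mul]

theorem homogMatrix_id [CommSemiring R] :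
    homogMatrix n (LinearMap.id : MvPolynomial σ R →ₗ[R] MvPolynomial σ R) = 1 := by
  ext α β
  simp only [homogMatrix, LinearMap.id_apply, Matrix.of_apply, coeff_monomial, Matrix.one_apply,
    Subtype.ext_iff]

theorem det_homogMatrix_conj [CommRing R] (e : MvPolynomial σ R ≃ₗ[R] MvPolynomial σ R)
    {L : MvPolynomial σ R →ₗ[R] MvPolynomial σ R}
    (he : ∀ p, p.IsHomogeneous n → (e p).IsHomogeneous n)
    (hL : ∀ p, p.IsHomogeneous n → (L p).IsHomogeneous n) :
    (homogMatrix n (e.symm.toLinearMap ∘ₗ L ∘ₗ e.toLinearMap)).det = (homogMatrix n L).det := by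
  have inv : homogMatrix n e.toLinearMap * homogMatrix n e.symm.toLinearMap = 1 := by
    rw [← homogMatrix_comp _ he, LinearEquiv.symm_comp, homogMatrix_id]
  have det_inv :
      (homogMatrix n e.toLinearMap).det * (homogMatrix n e.symm.toLinearMap).det = 1 := by
    rw [← Matrix.det_mul, inv, Matrix.det_one]
  have comp_homog (p) (hp : p.IsHomogeneous n) : ((L ∘ₗ e.toLinearMap) p).IsHomogeneous n :=
    hL _ (he p hp)
  rw [homogMatrix_comp _ comp_homog, homogMatrix_comp _ he, Matrix.det_mul, Matrix.det_mul,
    mul_right_comm, det_inv, one_mul]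

end HomogMatrix

section InvPow

open PowerSeries

variable {R A B : Type*} [CommRing R] [BinomialRing R] [CommRing A] [Algebra R A] [CommRing B]
  [Algebra R B]

/-- The power series `(1 - c z)^(-a)`, with exponent in a binomial ring. -/
noncomputable def invPow (a : R) (c : A) : A⟦X⟧ := rescale (-c) (binomialSeries A (-a))

theorem coeff_invPow (a : R) (c : A) (d : ℕ) :
    coeff d (invPow a c) = Ring.multichoose a d • c ^ d := by
  rw [invPow, coeff_rescale, binomialSeries_coeff, Ring.choose_neg', neg_pow]
  obtain hd | hd := d.even_or_odd <;> simp [hd, Int.negOnePow_even, Int.negOnePow_odd]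

theorem invPow_zero (c : A) : invPow (0 : R) c = 1 := by simp [invPow]

theorem invPow_add (a b : R) (c : A) : invPow (a + b) c = invPow a c * invPow b c := by
  rw [invPow, neg_add, binomialSeries_add, map_mul, invPow, invPow]

theorem invPow_sum {ι : Type*} (s : Finset ι) (a : ι → R) (c : A) :
    invPow (∑ i ∈ s, a i) c = ∏ i ∈ s, invPow (a i) c := by
  classical
  induction s using Finset.induction_on with
  | empty => rw [sum_empty, prod_empty, invPow_zero]
  | insert i s hi ih => rw [sum_insert hi, prod_insert hi, invPow_add, ih]

theorem invPow_natCast (m : ℕ) (c : A) : invPow (m : R) c = invPow (1 : R) c ^ m := by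
  simpa using invPow_sum (range m) (fun _ => (1 : R)) c

theorem invPow_one_mul_one_sub (c : A) : invPow (1 : R) c * (1 - C c * X) = 1 := by
  have : invPow (-1 : R) c = 1 - C c * X := by
    have := binomialSeries_nat (R := R) (A := A) 1
    rw [Nat.cast_one, pow_one] at this
    rw [invPow, neg_neg, this, map_add, map_one, rescale_X, map_neg, neg_mul, sub_eq_add_neg]
  rw [← this, ← invPow_add, add_neg_cancel, invPow_zero]

theorem invPow_one_sub_invPow_one (c e : A) :
    invPow (1 : R) c - invPow (1 : R) e =
      invPow (1 : R) c * invPow (1 : R) e * (C (c - e) * X) := by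
  rw [map_sub]
  linear_combination invPow (1 : R) e * invPow_one_mul_one_sub (R := R) c -
    invPow (1 : R) c * invPow_one_mul_one_sub (R := R) e

theorem map_invPow (f : A →ₐ[R] B) (a : R) (c : A) :
    PowerSeries.map (f : A →+* B) (invPow a c) = invPow a (f c) := by
  ext d
  simp [coeff_invPow]

end InvPow

section HomogeneousSeries

open MvPolynomial
open scoped PowerSeries

variable {σ R : Type*} [CommSemiring R]

/-- The power series whose coefficient of `z ^ d` is a homogeneous polynomial of degree `d`, for
every `d`. -/
def homogeneousSeries (σ R : Type*) [CommSemiring R] : Subalgebra R (MvPolynomial σ R)⟦X⟧ where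
  carrier := {f | ∀ d, (PowerSeries.coeff d f).IsHomogeneous d}
  mul_mem' hf hg d := by
    rw [PowerSeries.coeff_mul]
    refine IsHomogeneous.sum _ _ _ fun p hp => ?_
    rw [← mem_antidiagonal.1 hp]
    exact (hf _).mul (hg _)
  add_mem' hf hg d := by
    rw [map_add]
    exact (hf d).add (hg d)
  algebraMap_mem' r d := by
    rw [PowerSeries.algebraMap_apply, PowerSeries.coeff_C]
    split_ifs with hd
    · exact hd ▸ isHomogeneous_C σ r
    · exact isHomogeneous_zero σ R d

theorem aeval_mem_homogeneousSeries {τ : Type*} {g : τ → (MvPolynomial σ R)⟦X⟧}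
    (hg : ∀ i, g i ∈ homogeneousSeries σ R) (p : MvPolynomial τ R) :
    aeval g p ∈ homogeneousSeries σ R := by
  have range_le : (aeval g).range ≤ homogeneousSeries σ R := by
    rw [aeval_range]
    exact Algebra.adjoin_le (Set.range_subset_iff.2 hg)
  exact range_le ⟨p, rfl⟩

theorem invPow_mem_homogeneousSeries {R : Type*} [CommRing R] [BinomialRing R] (a : R)
    {c : MvPolynomial σ R} (hc : c.IsHomogeneous 1) : invPow a c ∈ homogeneousSeries σ R := by
  intro d
  rw [coeff_invPow, smul_eq_C_mul]
  simpa only [one_mul] using (hc.pow d).C_mul (Ring.multichoose a d)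

theorem coeff_single_eq_aeval_piSingle [DecidableEq σ] {d : ℕ} {p : MvPolynomial σ R}
    (hp : p.IsHomogeneous d) (i₀ : σ) :
    coeff (Finsupp.single i₀ d) p = aeval (Pi.single i₀ 1 : σ → R) p := by
  rw [aeval_eq_eval, eval_eq, sum_eq_single (Finsupp.single i₀ d)]
  · rw [prod_eq_one, mul_one]
    intro i hi
    rw [Finset.mem_singleton.1 (Finsupp.support_single_subset hi), Pi.single_eq_same, one_pow]
  · intro s hs s_ne
    have degree_eq : s.degree = d := (hp.degree_eq_sum_deg_support hs).symm
    obtain ⟨i, i_ne, hi⟩ : ∃ i ≠ i₀, s i ≠ 0 := by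
      by_contra! apply_eq_zero
      have s_eq : s = Finsupp.single i₀ (s i₀) := by
        ext i
        obtain rfl | i_ne := eq_or_ne i i₀
        · rw [Finsupp.single_eq_same]
        · rw [Finsupp.single_eq_of_ne i_ne, apply_eq_zero i i_ne]
      rw [s_eq, Finsupp.degree_single] at degree_eq
      exact s_ne (degree_eq ▸ s_eq)
    rw [prod_eq_zero (Finsupp.mem_support_iff.2 hi), mul_zero]
    rw [Pi.single_eq_of_ne i_ne, zero_pow hi]
  · intro h
    rw [notMem_support_iff.1 h, zero_mul]

end HomogeneousSeries

section BinomialOp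

open MvPolynomial

variable {σ R : Type*} [Fintype σ] [CommRing R] [BinomialRing R] {n : ℕ}

/-- The operator sending `p` to the coefficient of `z ^ n` in
`p(1/(1 - X_i z)) ∏ᵢ (1 - X_i z)^(-(x + 1))`, whose matrix in degree `n` consists of the products of
binomial coefficients. -/
noncomputable def binomialOp (n : ℕ) (x : R) : MvPolynomial σ R →ₗ[R] MvPolynomial σ R :=
  (PowerSeries.coeff n).restrictScalars R ∘ₗ
    LinearMap.mulLeft R (∏ i, invPow (x + 1) (X i)) ∘ₗ
      (aeval fun i => invPow (1 : R) (X i : MvPolynomial σ R)).toLinearMap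

theorem binomialOp_apply (x : R) (p : MvPolynomial σ R) :
    binomialOp n x p = PowerSeries.coeff n
      ((∏ i, invPow (x + 1) (X i)) * aeval (fun i => invPow (1 : R) (X i)) p) :=
  rfl

theorem algHom_binomialOp {A : Type*} [CommRing A] [Algebra R A] (f : MvPolynomial σ R →ₐ[R] A)
    (x : R) (p : MvPolynomial σ R) :
    f (binomialOp n x p) = PowerSeries.coeff n
      ((∏ i, invPow (x + 1) (f (X i))) * aeval (fun i => invPow (1 : R) (f (X i))) p) := by
  have map_aeval : PowerSeries.map (f : MvPolynomial σ R →+* A)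
      (aeval (fun i => invPow (1 : R) (X i : MvPolynomial σ R)) p) =
        aeval (fun i => invPow (1 : R) (f (X i))) p := by
    simp only [← map_invPow]
    exact comp_aeval_apply _ (PowerSeries.mapAlgHom f) p
  rw [← map_aeval]
  simp only [← map_invPow]
  rw [← map_prod, ← map_mul, PowerSeries.coeff_map]
  rfl

theorem isHomogeneous_binomialOp (x : R) (p : MvPolynomial σ R) :
    (binomialOp n x p).IsHomogeneous n := by
  have invPow_X_mem (a : R) (i : σ) : invPow a (X i) ∈ homogeneousSeries σ R :=
    invPow_mem_homogeneousSeries a (isHomogeneous_X R i)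
  exact mul_mem (prod_mem fun i _ => invPow_X_mem _ i)
    (aeval_mem_homogeneousSeries (invPow_X_mem 1) p) n

variable [DecidableEq σ]

theorem coeff_prod_invPow_X (a : σ → R) :
    PowerSeries.coeff n (∏ i, invPow (a i) (X i : MvPolynomial σ R)) =
      ∑ γ : Exponents σ n, monomial γ.1 (∏ i, Ring.multichoose (a i) (γ.1 i)) := by
  rw [PowerSeries.coeff_prod, ← sum_coe_sort]
  refine sum_congr rfl fun γ _ => ?_
  simp only [coeff_invPow, smul_eq_C_mul]
  rw [prod_mul_distrib, ← monomial_one_eq_prod_X_pow, ← map_prod, C_mul_monomial, mul_one]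

theorem homogMatrix_binomialOp (x : R) :
    homogMatrix n (binomialOp n x) = Matrix.of fun α β : Exponents σ n =>
      ∏ i, Ring.choose (x + (α.1 i : R) + (β.1 i : R)) (β.1 i) := by
  ext α β
  have image : binomialOp n x (monomial α.1 1) =
      PowerSeries.coeff n (∏ i, invPow (x + 1 + (α.1 i : R)) (X i : MvPolynomial σ R)) := by
    rw [binomialOp_apply, monomial_one_eq_prod_X_pow, map_prod, ← prod_mul_distrib]
    simp only [map_pow, aeval_X, ← invPow_natCast, ← invPow_add]
  rw [homogMatrix, Matrix.of_apply, image, coeff_prod_invPow_X, coeff_sum]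
  simp only [coeff_monomial, Subtype.coe_inj, sum_ite_eq', mem_univ, if_true, Matrix.of_apply,
    Ring.multichoose_eq]
  refine prod_congr rfl fun i _ => ?_
  congr 1
  ring

end BinomialOp

section Shear

open MvPolynomial
open scoped PowerSeries

variable {σ R : Type*} [DecidableEq σ] [CommRing R] {n : ℕ}

/-- The change of variables fixing `X i₀` and sending every other variable `X i` to `X i - X i₀`.
-/
noncomputable def shear (i₀ : σ) : MvPolynomial σ R ≃ₐ[R] MvPolynomial σ R :=
  AlgEquiv.ofAlgHom
    (aeval fun i => if i = i₀ then X i else X i - X i₀)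
    (aeval fun i => if i = i₀ then X i else X i + X i₀)
    (by ext1 i; by_cases hi : i = i₀ <;> simp [hi])
    (by ext1 i; by_cases hi : i = i₀ <;> simp [hi])

theorem shear_X (i₀ i : σ) :
    shear i₀ (X i : MvPolynomial σ R) = if i = i₀ then X i else X i - X i₀ :=
  aeval_X _ i

theorem shear_symm_X (i₀ i : σ) :
    (shear i₀).symm (X i : MvPolynomial σ R) = if i = i₀ then X i else X i + X i₀ :=
  aeval_X _ i

theorem isHomogeneous_shear (i₀ : σ) {p : MvPolynomial σ R} (hp : p.IsHomogeneous n) :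
    (shear i₀ p).IsHomogeneous n := by
  rw [← one_mul n]
  refine hp.aeval _ fun i => ?_
  split_ifs
  · exact isHomogeneous_X R i
  · exact (isHomogeneous_X R i).sub (isHomogeneous_X R i₀)

theorem isHomogeneous_shear_symm_X (i₀ i : σ) :
    ((shear i₀).symm (X i : MvPolynomial σ R)).IsHomogeneous 1 := by
  rw [shear_symm_X]
  split_ifs
  · exact isHomogeneous_X R i
  · exact (isHomogeneous_X R i).add (isHomogeneous_X R i₀)

variable [BinomialRing R]

theorem aeval_invPow_shear_X_pow (i₀ i : σ) (s : σ →₀ ℕ) :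
    aeval (fun j => invPow (1 : R) ((shear i₀).symm (X j : MvPolynomial σ R)))
        (shear i₀ (X i : MvPolynomial σ R)) ^ s i =
      invPow (s i : R) ((shear i₀).symm (X i)) *
        (PowerSeries.C (X i) * (PowerSeries.X * invPow (1 : R) (X i₀))) ^ s.erase i₀ i := by
  obtain rfl | hi := eq_or_ne i i₀
  · simp [shear_X, invPow_natCast]
  · have sub_eq : (shear i₀).symm (X i : MvPolynomial σ R) - (shear i₀).symm (X i₀) = X i := by
      rw [← map_sub, AlgEquiv.symm_apply_eq, shear_X, if_neg hi]
    have symm_fixed : (shear i₀).symm (X i₀ : MvPolynomial σ R) = X i₀ := by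
      rw [shear_symm_X, if_pos rfl]
    rw [shear_X, if_neg hi, map_sub, aeval_X, aeval_X, invPow_one_sub_invPow_one, sub_eq,
      symm_fixed, invPow_natCast, Finsupp.erase_ne hi, ← mul_pow]
    ring

variable [Fintype σ]

theorem aeval_invPow_shear_monomial (i₀ : σ) (s : σ →₀ ℕ) :
    aeval (fun i => invPow (1 : R) ((shear i₀).symm (X i : MvPolynomial σ R)))
        (shear i₀ (monomial s (1 : R))) =
      PowerSeries.C (monomial (s.erase i₀) 1) * (PowerSeries.X ^ (s.erase i₀).degree *
        ((∏ i, invPow (s i : R) ((shear i₀).symm (X i))) *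
          invPow ((s.erase i₀).degree : R) (X i₀))) := by
  rw [monomial_one_eq_prod_X_pow, map_prod, map_prod]
  simp only [map_pow, aeval_invPow_shear_X_pow, mul_pow]
  rw [prod_mul_distrib, prod_mul_distrib, prod_mul_distrib, prod_pow_eq_pow_sum,
    prod_pow_eq_pow_sum, ← Finsupp.degree_eq_sum, ← invPow_natCast, monomial_one_eq_prod_X_pow,
    map_prod]
  simp only [map_pow]
  ring

/-- The generating series of the operator `binomialOp` conjugated by `shear i₀` and evaluated at the
monomial with exponent `s`, with the factor `∏ (X i * z) ^ s i` over `i ≠ i₀` removed. -/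
noncomputable def shearedSeries (x : R) (i₀ : σ) (s : σ →₀ ℕ) : (MvPolynomial σ R)⟦X⟧ :=
  (∏ i, invPow (x + 1 + (s i : R)) ((shear i₀).symm (X i))) *
    invPow ((s.erase i₀).degree : R) (X i₀)

theorem shearedSeries_mem_homogeneousSeries (x : R) (i₀ : σ) (s : σ →₀ ℕ) :
    shearedSeries x i₀ s ∈ homogeneousSeries σ R :=
  mul_mem (prod_mem fun i _ => invPow_mem_homogeneousSeries _ (isHomogeneous_shear_symm_X i₀ i))
    (invPow_mem_homogeneousSeries _ (isHomogeneous_X R i₀))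

theorem shear_symm_binomialOp_shear_monomial (x : R) (i₀ : σ) (s : σ →₀ ℕ) :
    (shear i₀).symm (binomialOp s.degree x (shear i₀ (monomial s 1))) =
      monomial (s.erase i₀) 1 * PowerSeries.coeff (s i₀) (shearedSeries x i₀ s) := by
  have degree_eq : s.degree = s i₀ + (s.erase i₀).degree := by
    conv_lhs => rw [← Finsupp.single_add_erase i₀ s]
    rw [map_add, Finsupp.degree_single]
  refine (algHom_binomialOp (shear i₀).symm.toAlgHom x _).trans ?_
  simp only [AlgEquiv.toAlgHom_apply]
  rw [aeval_invPow_shear_monomial, mul_left_comm, mul_left_comm _ (PowerSeries.X ^ _),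
    PowerSeries.coeff_C_mul, degree_eq, PowerSeries.coeff_X_pow_mul, shearedSeries, ← mul_assoc,
    ← prod_mul_distrib]
  simp only [← invPow_add]

theorem coeff_single_shearedSeries (x : R) (i₀ : σ) (s : σ →₀ ℕ) :
    coeff (Finsupp.single i₀ (s i₀)) (PowerSeries.coeff (s i₀) (shearedSeries x i₀ s)) =
      Ring.choose (Fintype.card σ * (x + 1) + 2 * s.degree - 1) (s i₀) := by
  set ev : MvPolynomial σ R →ₐ[R] R := aeval (Pi.single i₀ 1) with ev_def
  have ev_shear_symm_X (i : σ) : ev ((shear i₀).symm (X i)) = 1 := by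
    rw [shear_symm_X]
    split_ifs with hi <;> simp [ev_def, hi]
  have ev_X : ev (X i₀) = 1 := by simp [ev_def]
  have map_series : PowerSeries.map (ev : MvPolynomial σ R →+* R) (shearedSeries x i₀ s) =
      invPow (∑ i, (x + 1 + (s i : R)) + ((s.erase i₀).degree : R)) 1 := by
    rw [shearedSeries, map_mul, map_prod, invPow_add, invPow_sum]
    simp only [map_invPow, ev_shear_symm_X, ev_X]
  rw [coeff_single_eq_aeval_piSingle (shearedSeries_mem_homogeneousSeries x i₀ s _), ← ev_def,
    ← RingHom.coe_coe, ← PowerSeries.coeff_map, map_series, coeff_invPow, one_pow, smul_eq_mul,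
    mul_one, Ring.multichoose_eq]
  have degree_eq : ((s.erase i₀).degree : R) + (s i₀ : R) = s.degree := by
    conv_rhs => rw [← Finsupp.erase_add_single i₀ s, map_add, Finsupp.degree_single, Nat.cast_add]
  congr 1
  rw [sum_add_distrib, sum_const, card_univ, nsmul_eq_mul, ← Nat.cast_sum, ← Finsupp.degree_eq_sum]
  linear_combination degree_eq

end Shear

section Determinant

open MvPolynomial

variable {σ R : Type*} [Fintype σ] [DecidableEq σ] [CommRing R] [BinomialRing R] {n : ℕ}

theorem Exponents.eq_of_erase_le {γ δ : Exponents σ n} {i₀ : σ} (h : γ.1.erase i₀ ≤ δ.1)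
    (hi₀ : γ.1 i₀ ≤ δ.1 i₀) : γ = δ := by
  have le : γ.1 ≤ δ.1 := fun i => by
    obtain rfl | hi := eq_or_ne i i₀
    · exact hi₀
    · simpa only [Finsupp.erase_ne hi] using h i
  have degree_split := congrArg Finsupp.degree (add_tsub_cancel_of_le le)
  rw [map_add, γ.degree_eq, δ.degree_eq] at degree_split
  have sub_eq_zero : δ.1 - γ.1 = 0 := (Finsupp.degree_eq_zero_iff _).1 (by omega)
  exact Subtype.ext (le.antisymm (tsub_eq_zero_iff_le.1 sub_eq_zero))

theorem det_homogMatrix_binomialOp (x : R) (i₀ : σ) :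
    (homogMatrix n (binomialOp n x : MvPolynomial σ R →ₗ[R] MvPolynomial σ R)).det =
      ∏ γ : Exponents σ n,
        Ring.choose (Fintype.card σ * (x + 1) + 2 * n - 1) (γ.1 i₀) := by
  rw [← det_homogMatrix_conj (shear i₀).toLinearEquiv (fun _ hp => isHomogeneous_shear i₀ hp)
    fun p _ => isHomogeneous_binomialOp x p]
  have image (γ : Exponents σ n) :
      (shear i₀).symm (binomialOp n x (shear i₀ (monomial γ.1 (1 : R)))) =
        monomial (γ.1.erase i₀) 1 * PowerSeries.coeff (γ.1 i₀) (shearedSeries x i₀ γ.1) := by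
    rw [← shear_symm_binomialOp_shear_monomial, γ.degree_eq]
  rw [det_eq_prod_diag_of_forall_le fun γ : Exponents σ n => OrderDual.toDual (γ.1 i₀)]
  · refine prod_congr rfl fun γ _ => ?_
    refine (congrArg (coeff γ.1) (image γ)).trans ?_
    nth_rw 1 [← Finsupp.erase_add_single i₀ γ.1]
    rw [coeff_monomial_mul, one_mul, coeff_single_shearedSeries, γ.degree_eq]
  · intro γ δ γ_ne hle
    refine (congrArg (coeff δ.1) (image γ)).trans ?_
    rw [coeff_monomial_mul', if_neg]
    exact fun h => γ_ne (Exponents.eq_of_erase_le h hle)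

end Determinant

section BinomialRing

variable {R : Type*} [CommRing R] [BinomialRing R]

theorem factorial_mul_choose (y : R) (m : ℕ) :
    (m.factorial : R) * Ring.choose y m = ∏ j ∈ range m, (y - j) := by
  rw [← nsmul_eq_mul, ← Ring.descPochhammer_eq_factorial_smul_choose,
    ← descPochhammer_eval_eq_prod_range, ← descPochhammer_map (Int.castRingHom R),
    Polynomial.eval_map, ← Polynomial.aeval_eq_smeval, Polynomial.aeval_def, algebraMap_int_eq]

theorem bch_eq_choose {F : Type*} [Field F] [CharZero F] (y : F) (m : ℕ) :
    bch y m = Ring.choose y m := by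
  rw [bch, div_eq_iff (Nat.cast_ne_zero.2 m.factorial_ne_zero), mul_comm, factorial_mul_choose]

theorem prod_exponents_factorial_mul_prod_choose {σ : Type*} [Fintype σ] [DecidableEq σ] (n : ℕ)
    (i₀ : σ) (y : R) :
    (∏ j ∈ range n, ((j + 1 : ℕ) : R) ^
        (n - (j + 1) + (Fintype.card σ - 1)).choose (Fintype.card σ - 1)) *
      ∏ γ : Exponents σ n, Ring.choose y (γ.1 i₀) =
    ∏ j ∈ range n, (y - j) ^
        (n - (j + 1) + (Fintype.card σ - 1)).choose (Fintype.card σ - 1) := by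
  rw [← prod_exponents_prod_range i₀, ← prod_exponents_prod_range i₀, ← prod_mul_distrib]
  refine prod_congr rfl fun γ _ => ?_
  rw [← Nat.cast_prod, prod_range_add_one_eq_factorial, factorial_mul_choose]

end BinomialRing

/-- Compositions of `n` into `k` parts as the exponents of the monomials of degree `n` in `k`
variables. -/
noncomputable def compEquivExponents (n k : ℕ) : Comp n k ≃ Exponents (Fin k) n where
  toFun α := ⟨Finsupp.equivFunOnFinite.symm fun i => α.1 i, by
    rw [mem_finsuppAntidiag_univ_iff_degree, Finsupp.degree_eq_sum]
    exact α.2⟩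
  invFun γ := ⟨fun i => ⟨γ.1 i, Nat.lt_succ_of_le
      ((Finsupp.le_degree i γ.1).trans_eq γ.degree_eq)⟩, by
    rw [← Finsupp.degree_eq_sum]
    exact γ.degree_eq⟩
  left_inv _ := rfl
  right_inv _ := by ext; rfl

theorem det_choose_comp {R : Type*} [CommRing R] [BinomialRing R] {n k : ℕ} (i₀ : Fin k) (x : R) :
    Matrix.det (Matrix.of fun α β : Comp n k =>
        ∏ i, Ring.choose (x + ((α.1 i : ℕ) : R) + ((β.1 i : ℕ) : R)) (β.1 i : ℕ)) =
      ∏ γ : Exponents (Fin k) n, Ring.choose (k * (x + 1) + 2 * n - 1) (γ.1 i₀) := by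
  have det_eq := det_homogMatrix_binomialOp (n := n) x i₀
  rw [homogMatrix_binomialOp, Fintype.card_fin] at det_eq
  rw [← det_eq, ← Matrix.det_submatrix_equiv_self (compEquivExponents n k)]
  rfl

theorem stmt4_general {R : Type*} [CommRing R] [BinomialRing R] (n k : ℕ) (hk : 0 < k) (x : R) :
    (∏ i ∈ Icc 1 n, (i : R) ^ (n + k - i - 1).choose (k - 1)) *
        Matrix.det (Matrix.of fun α β : Comp n k =>
          ∏ i, Ring.choose (x + ((α.1 i : ℕ) : R) + ((β.1 i : ℕ) : R)) (β.1 i : ℕ)) =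
      ∏ i ∈ range n, ((k : R) * x + n + k + i) ^ (k + i - 1).choose (k - 1) := by
  have denominator : ∏ i ∈ Icc 1 n, (i : R) ^ (n + k - i - 1).choose (k - 1) =
      ∏ j ∈ range n, ((j + 1 : ℕ) : R) ^ (n - (j + 1) + (k - 1)).choose (k - 1) := by
    rw [range_eq_Ico, prod_Ico_add' (fun i : ℕ => (i : R) ^ (n - i + (k - 1)).choose (k - 1))]
    refine prod_congr rfl fun i hi => ?_
    have i_le := (mem_Icc.1 hi).2
    congr 2
    omega
  have product_formula :=
    prod_exponents_factorial_mul_prod_choose n (⟨0, hk⟩ : Fin k) ((k : R) * (x + 1) + 2 * n - 1)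
  rw [Fintype.card_fin] at product_formula
  rw [det_choose_comp ⟨0, hk⟩, denominator, product_formula, ← prod_range_reflect]
  refine prod_congr rfl fun i hi => ?_
  have i_lt := mem_range.1 hi
  congr 1
  · rw [Nat.sub_sub, Nat.cast_sub (by omega)]
    push_cast
    ring
  · congr 1
    omega

theorem stmt4 {F : Type*} [Field F] [CharZero F] (n k : ℕ) (hn : 0 < n) (hk : 0 < k)
    (x : F) :
    Matrix.det (Matrix.of fun α β : Comp n k =>
        ∏ i, bch (x + ((α.1 i : ℕ) : F) + ((β.1 i : ℕ) : F)) ((β.1 i : ℕ))) =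
      (∏ i ∈ Finset.range n,
          ((k : F) * x + (n : F) + (k : F) + (i : F)) ^ ((k + i - 1).choose (k - 1))) /
        ∏ i ∈ Finset.Icc 1 n, (i : F) ^ ((n + k - i - 1).choose (k - 1)) := by
  have denominator_ne_zero :
      ∏ i ∈ Icc 1 n, (i : F) ^ (n + k - i - 1).choose (k - 1) ≠ 0 :=
    prod_ne_zero_iff.2 fun i hi =>
      pow_ne_zero _ (Nat.cast_ne_zero.2 (Nat.one_le_iff_ne_zero.1 (mem_Icc.1 hi).1))
  simp only [bch_eq_choose]
  rw [eq_div_iff denominator_ne_zero, mul_comm, stmt4_general n k hk x]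
end

section
/- Main theorem: For vectors of indeterminates x = (x_1,...,x_k) and λ = (λ_1,...,λ_k), and positive integers n, k, the determinant of the matrix indexed by compositions α, β of n into k non-negative parts, with entry ∏_{i=1}^k binom(x_i+λ_i α_i, β_i), equals (∏_{j=1}^k λ_j)^{binom(n+k-1,k)} times the product over all non-negative integer vectors (ε_1,...,ε_k) with ε_1+···+ε_k < n of (n + Σ_{j=1}^k (x_j - ε_j)/λ_j), divided by ∏_{i=1}^n i^{binom(n+k-i-1,k-1)}. -/
open Finset

/-!
On a composition `α` of `n` the coordinates `y i = x i + l i * α i` satisfy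
`∑ i, (y i - u i) / l i = n + ∑ i, (x i - u i) / l i`. Let `B u` be the vector of values of
`∏ i, binom (y i, u i)`. Since `(y - u) * binom (y, u) = (u + 1) * binom (y, u + 1)`, the relation
writes `B (u + e_p)` as a multiple of `B u` plus a combination of the `B (u + e_i)` with `i ≠ p`,
the multiple being `l p / (u p + 1)` times the linear factor indexed by `u`. Lowering the exponents
at a fixed `p` one level at a time is therefore triangular in the exponent at `p`, and every vector
of weight less than `n` contributes its linear factor exactly once. Once all exponents at `p` are
`0`, Newton's forward difference expansion passes, again triangularly, to the unitriangular matrix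
of the `∏ i, binom (α i, β i)` over `i ≠ p`, at the cost of the powers of the `l i` with `i ≠ p`.
-/

section Triangular

variable {m α R : Type*} [Fintype m] [DecidableEq m] [LinearOrder α] [CommRing R]

theorem det_eq_prod_diag_of_rank (M : Matrix m m R) (r : m → α)
    (h : ∀ i j, i ≠ j → r j ≤ r i → M i j = 0) : M.det = ∏ i, M i i := by
  -- Breaking the ties of `r` arbitrarily makes `M` upper triangular for a linear order on `m`.
  let key : m → α ×ₗ Fin (Fintype.card m) := fun i => toLex (r i, Fintype.equivFin m i)
  have key_injective : Function.Injective key := fun i j hij => by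
    simpa [key] using (congrArg (Prod.snd ∘ ofLex) hij)
  let : LinearOrder m := .lift' key key_injective
  exact Matrix.det_of_isUpperTriangular fun i j hij =>
    h i j hij.ne' (Prod.Lex.monotone_fst _ _ (le_of_lt (show key j < key i from hij)))

theorem det_eq_prod_mul_det_of_col_sub_smul_mem_span {M N : Matrix m m R} (r : m → α) (d : m → R)
    (h : ∀ j, M.col j - d j • N.col j ∈ Submodule.span R (N.col '' {i | r i < r j})) :
    M.det = (∏ j, d j) * N.det := by
  classical
  have hcoeff (j : m) : ∃ c : m → R,
      ∑ i ∈ univ.filter (r · < r j), c i • N.col i = M.col j - d j • N.col j := by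
    rw [← Submodule.mem_span_image_finset_iff_exists_fun' (R := R)]
    simpa using h j
  choose c hc using hcoeff
  let T : Matrix m m R := .of fun i j => if i = j then d j else if r i < r j then c j i else 0
  have hMNT : M = N * T := by
    ext a j
    have hj := congrFun (eq_add_of_sub_eq (hc j).symm) a
    simp only [Pi.add_apply, Finset.sum_apply, Pi.smul_apply, smul_eq_mul, Matrix.col_apply] at hj
    rw [hj, Matrix.mul_apply, ← add_sum_erase _ _ (mem_univ j), add_comm]
    congr 1
    · simp [T, mul_comm]
    · rw [sum_filter, ← add_sum_erase _ _ (mem_univ j), if_neg (lt_irrefl _), zero_add]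
      refine sum_congr rfl fun i hi => ?_
      simp [T, ne_of_mem_erase hi, mul_comm]
  have hT : T.det = ∏ j, d j := by
    rw [det_eq_prod_diag_of_rank T r fun i j hij hr => by simp [T, hij, hr.not_gt]]
    simp [T]
  rw [hMNT, Matrix.det_mul, hT, mul_comm]

end Triangular

section Binomial

variable {F : Type*} [Field F]

theorem bch_eq_eval_descPochhammer_div (y : F) (m : ℕ) :
    bch y m = (descPochhammer F m).eval y / m.factorial := by
  rw [bch, descPochhammer_eval_eq_prod_range]

variable [CharZero F]

theorem succ_mul_bch_succ (y : F) (m : ℕ) : ((m : F) + 1) * bch y (m + 1) = (y - m) * bch y m := by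
  have hm : (m.factorial : F) ≠ 0 := mod_cast m.factorial_ne_zero
  have hm' : (m : F) + 1 ≠ 0 := m.cast_add_one_ne_zero
  rw [bch, bch, prod_range_succ, Nat.factorial_succ]
  push_cast
  field_simp

theorem exists_bch_add_mul_eq_sum_choose {l : F} (hl : l ≠ 0) (x : F) (m : ℕ) :
    ∃ c : ℕ → F, c m = l ^ m ∧
      ∀ a : ℕ, bch (x + l * a) m = ∑ j ∈ range (m + 1), c j * a.choose j := by
  let P : Polynomial F := .C ((m.factorial : F)⁻¹) * (descPochhammer F m).comp (.C l * .X + .C x)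
  have hP (t : F) : P.eval t = bch (x + l * t) m := by
    simp [P, bch_eq_eval_descPochhammer_div, add_comm, div_eq_inv_mul]
  have hm : (m.factorial : F) ≠ 0 := mod_cast m.factorial_ne_zero
  have hlin : (Polynomial.C l * .X + .C x).natDegree = 1 := Polynomial.natDegree_linear hl
  have hdeg : P.natDegree = m := by
    rw [Polynomial.natDegree_C_mul (inv_ne_zero hm), Polynomial.natDegree_comp, hlin,
      descPochhammer_natDegree, mul_one]
  have hlead : P.leadingCoeff = l ^ m / m.factorial := by
    rw [Polynomial.leadingCoeff_mul, Polynomial.leadingCoeff_comp (by simp [hlin]),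
      (monic_descPochhammer F m).leadingCoeff, descPochhammer_natDegree,
      Polynomial.leadingCoeff_linear hl, Polynomial.leadingCoeff_C, one_mul, div_eq_inv_mul]
  refine ⟨fun j => (fwdDiff (1 : F))^[j] P.eval 0, ?_, fun a => ?_⟩
  · have h := congrFun P.fwdDiff_iter_degree_eq_factorial 0
    rw [hdeg, hlead] at h
    simpa [hm] using h
  · have h := shift_eq_sum_fwdDiff_iter (1 : F) P.eval a 0
    rw [zero_add, nsmul_one, hP] at h
    have hvanish : ∀ j, m < j → (fwdDiff (1 : F))^[j] P.eval 0 = 0 := fun j hj =>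
      congrFun (Polynomial.fwdDiff_iter_eq_zero_of_degree_lt (hdeg.trans_lt hj)) 0
    rw [h]
    simp only [nsmul_eq_mul, mul_comm (Nat.cast _)]
    rw [sum_subset (range_subset_range.2 (Nat.le_add_left (a + 1) m)), eq_comm,
      sum_subset (range_subset_range.2 (by omega : m + 1 ≤ m + (a + 1)))]
    · intro j _ hj
      rw [hvanish j (by simpa using hj), zero_mul]
    · intro j _ hj
      rw [Nat.choose_eq_zero_of_lt (by simpa using hj), Nat.cast_zero, mul_zero]

end Binomial

theorem sum_update_add {ι : Type*} [Fintype ι] [DecidableEq ι] (u : ι → ℕ) (p : ι) (a : ℕ) :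
    ∑ i, Function.update u p a i + u p = ∑ i, u i + a := by
  rw [sum_update_of_mem (mem_univ p), sum_eq_add_sum_sdiff_singleton_of_mem (mem_univ p) u]
  omega

theorem apply_lt_succ_of_sum_le {ι : Type*} [Fintype ι] {w : ι → ℕ} {n : ℕ} (hw : ∑ i, w i ≤ n)
    (i : ι) : w i < n + 1 :=
  Nat.lt_succ_of_le ((single_le_sum (fun _ _ => Nat.zero_le _) (mem_univ i)).trans hw)

section TruncAt

variable {ι : Type*} [DecidableEq ι] {p : ι} {j : ℕ} {u : ι → ℕ}

/-- The exponent vector `u` with its `p`-th entry lowered to at most `j`. -/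
def truncAt (p : ι) (j : ℕ) (u : ι → ℕ) : ι → ℕ := Function.update u p (min (u p) j)

theorem truncAt_apply_self : truncAt p j u p = min (u p) j := Function.update_self ..

theorem truncAt_apply_of_ne {i : ι} (hi : i ≠ p) : truncAt p j u i = u i :=
  Function.update_of_ne hi ..

theorem truncAt_eq_self (h : u p ≤ j) : truncAt p j u = u := by
  rw [truncAt, min_eq_left h, Function.update_eq_self]

theorem truncAt_succ (h : j < u p) : truncAt p (j + 1) u = truncAt p j u + Pi.single p 1 := by
  ext i
  obtain rfl | hi := eq_or_ne i p
  · simp only [truncAt_apply_self, Pi.add_apply, Pi.single_eq_same]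
    omega
  · simp [truncAt_apply_of_ne hi, hi]

theorem sum_truncAt_add [Fintype ι] (h : j ≤ u p) :
    ∑ i, truncAt p j u i + u p = ∑ i, u i + j := by
  rw [truncAt, sum_update_add, min_eq_right h]

end TruncAt

namespace Comp

variable {n k : ℕ}

/-- The parts of a composition as natural numbers. -/
def parts (a : Comp n k) : Fin k → ℕ := fun i => a.1 i

theorem sum_parts (a : Comp n k) : ∑ i, a.parts i = n := a.2

theorem parts_injective : Function.Injective (parts : Comp n k → Fin k → ℕ) := fun _ _ h =>
  Subtype.ext (funext fun i => Fin.ext (congrFun h i))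

theorem parts_le (a : Comp n k) (i : Fin k) : a.parts i ≤ n := (a.1 i).is_le

theorem eq_of_parts_le {a b : Comp n k} (h : a.parts ≤ b.parts) : a = b :=
  parts_injective <| funext fun i =>
    (sum_eq_sum_iff_of_le fun i _ => h i).1 (a.sum_parts.trans b.sum_parts.symm) i (mem_univ i)

theorem eq_of_parts_eq_of_ne {a b : Comp n k} (p : Fin k)
    (h : ∀ i, i ≠ p → a.parts i = b.parts i) : a = b := by
  wlog hp : a.parts p ≤ b.parts p generalizing a b
  · exact (this (fun i hi => (h i hi).symm) (le_of_not_ge hp)).symm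
  refine eq_of_parts_le fun i => ?_
  obtain rfl | hi := eq_or_ne i p
  exacts [hp, (h i hi).le]

/-- The composition of `n` with the given parts. -/
def ofParts (w : Fin k → ℕ) (hw : ∑ i, w i = n) : Comp n k :=
  ⟨fun i => ⟨w i, apply_lt_succ_of_sum_le hw.le i⟩, hw⟩

theorem parts_ofParts (w : Fin k → ℕ) (hw : ∑ i, w i = n) : (ofParts w hw).parts = w := rfl

/-- The composition of `n` obtained from a vector of weight at most `n` by enlarging its `p`-th
entry. -/
def fill (p : Fin k) (w : Fin k → ℕ) (hw : ∑ i, w i ≤ n) : Comp n k :=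
  ofParts (w + Pi.single p (n - ∑ i, w i)) <| by
    simp only [Pi.add_apply, sum_add_distrib, sum_pi_single', mem_univ, if_true]
    omega

theorem parts_fill_self_add (p : Fin k) (w : Fin k → ℕ) (hw : ∑ i, w i ≤ n) :
    (fill p w hw).parts p + ∑ i, w i = n + w p := by
  simp only [fill, parts_ofParts, Pi.add_apply, Pi.single_eq_same]
  omega

theorem parts_fill_of_ne {p i : Fin k} (hi : i ≠ p) (w : Fin k → ℕ) (hw : ∑ i, w i ≤ n) :
    (fill p w hw).parts i = w i := by
  simp [fill, parts_ofParts, hi]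

theorem truncAt_parts_fill (p : Fin k) (w : Fin k → ℕ) (hw : ∑ i, w i ≤ n) :
    truncAt p (w p) (fill p w hw).parts = w := by
  ext i
  obtain rfl | hi := eq_or_ne i p
  · have := parts_fill_self_add i w hw
    rw [truncAt_apply_self]
    omega
  · rw [truncAt_apply_of_ne hi, parts_fill_of_ne hi]

theorem sum_truncAt_parts_add (b : Comp n k) {p : Fin k} {j : ℕ} (hj : j ≤ b.parts p) :
    ∑ i, truncAt p j b.parts i + b.parts p = n + j := by
  rw [sum_truncAt_add hj, sum_parts]

theorem card_eq_choose (hk : 0 < k) :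
    Fintype.card (Comp n k) = (n + (k - 1)).choose (k - 1) := by
  let e : Comp n k ≃ {w : Fin k → ℕ // ∑ i, w i = n} :=
    { toFun := fun a => ⟨a.parts, a.sum_parts⟩
      invFun := fun w => ofParts w.1 w.2
      left_inv := fun _ => rfl
      right_inv := fun _ => rfl }
  rw [Fintype.card_congr (e.trans (Sym.equivNatSumOfFintype (Fin k) n).symm),
    Sym.card_sym_eq_choose, Fintype.card_fin,
    Nat.choose_symm_of_eq_add (by omega : k + n - 1 = n + (k - 1))]
  congr 1
  omega

end Comp

section SubComp

variable {n k : ℕ} {M : Type*} [CommMonoid M]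

/-- The vectors of `k` non-negative integers with sum less than `n`, which index the linear factors
of the determinant. -/
abbrev subComp (n k : ℕ) : Finset (Fin k → Fin (n + 1)) :=
  univ.filter fun f : Fin k → Fin (n + 1) => ∑ i, (f i : ℕ) < n

theorem mem_subComp {e : Fin k → Fin (n + 1)} : e ∈ subComp n k ↔ ∑ i, (e i : ℕ) < n := by
  simp [subComp]

theorem lt_of_mem_subComp {e : Fin k → Fin (n + 1)} (he : e ∈ subComp n k) (p : Fin k) :
    (e p : ℕ) < n :=
  (single_le_sum (f := fun i => (e i : ℕ)) (fun _ _ => Nat.zero_le _) (mem_univ p)).trans_lt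
    (mem_subComp.1 he)

/-- Each `e` of weight less than `n` is `truncAt p j b` for exactly one pair `j < b p`, namely
`j = e p` and `b = fill p e`. -/
theorem prod_truncAt_parts_eq_prod_subComp (p : Fin k) (g : (Fin k → ℕ) → M) :
    ∏ j ∈ range n, ∏ b : Comp n k, (if j < b.parts p then g (truncAt p j b.parts) else 1) =
      ∏ e ∈ subComp n k, g fun i => e i := by
  have htrunc {q : ℕ × Comp n k} (hq : q ∈ (range n ×ˢ univ).filter fun q => q.1 < q.2.parts p) :
      ∑ i, truncAt p q.1 q.2.parts i < n := by
    have hlt : q.1 < q.2.parts p := (mem_filter.1 hq).2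
    have := q.2.sum_truncAt_parts_add hlt.le
    omega
  rw [← prod_product', ← prod_filter]
  refine prod_bij'
    (fun q hq i => ⟨truncAt p q.1 q.2.parts i, apply_lt_succ_of_sum_le (htrunc hq).le i⟩)
    (fun e he => (e p, Comp.fill p (fun i => e i) (mem_subComp.1 he).le)) ?_ ?_ ?_ ?_ ?_
  · exact fun q hq => mem_subComp.2 (htrunc hq)
  · intro e he
    have hsum := mem_subComp.1 he
    have := Comp.parts_fill_self_add p (fun i => (e i : ℕ)) hsum.le
    have := lt_of_mem_subComp he p
    simp only [mem_filter, mem_product, mem_range, mem_univ, and_true]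
    omega
  · rintro ⟨j, b⟩ hq
    have hj : j < b.parts p := (mem_filter.1 hq).2
    refine Prod.ext (truncAt_apply_self.trans (min_eq_right hj.le))
      (Comp.eq_of_parts_eq_of_ne p fun i hi => ?_)
    rw [Comp.parts_fill_of_ne hi]
    exact truncAt_apply_of_ne hi
  · exact fun e he => funext fun i => Fin.ext <|
      congrFun (Comp.truncAt_parts_fill p (fun i => e i) (mem_subComp.1 he).le) i
  · exact fun _ _ => rfl

theorem prod_pow_parts_eq_pow_card_subComp (p : Fin k) (c : M) :
    ∏ b : Comp n k, c ^ b.parts p = c ^ (subComp n k).card := by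
  rw [← prod_const, ← prod_truncAt_parts_eq_prod_subComp p fun _ => c, prod_comm]
  refine prod_congr rfl fun b _ => ?_
  have hrange : (range n).filter (· < b.parts p) = range (b.parts p) := by
    ext j
    have := b.parts_le p
    simp only [mem_filter, mem_range]
    omega
  rw [← prod_filter, hrange, prod_const, card_range]

/-- Replacing the entry `i` at `p` by the slack `n - 1 - |e|` turns a vector `e` of weight less
than `n` into a composition of `n - 1 - i`. -/
theorem card_filter_subComp (p : Fin k) {i : ℕ} (hi : i < n) :
    ((subComp n k).filter fun e => (e p : ℕ) = i).card =
      (n - 1 - i + (k - 1)).choose (k - 1) := by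
  have hslack {e : Fin k → Fin (n + 1)} (he : e ∈ (subComp n k).filter fun e => (e p : ℕ) = i) :
      ∑ t, Function.update (fun t => (e t : ℕ)) p (n - 1 - ∑ t, (e t : ℕ)) t = n - 1 - i := by
    have := sum_update_add (fun t => (e t : ℕ)) p (n - 1 - ∑ t, (e t : ℕ))
    simp only [mem_filter, mem_univ, true_and] at he
    omega
  have hsum (c : Comp (n - 1 - i) k) :
      ∑ t, Function.update c.parts p i t + c.parts p = n - 1 := by
    rw [sum_update_add, c.sum_parts, Nat.sub_add_cancel (Nat.le_sub_one_of_lt hi)]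
  rw [← Comp.card_eq_choose p.pos, ← card_univ]
  refine card_bij' (fun e he => Comp.ofParts _ (hslack he))
    (fun c _ t => ⟨Function.update c.parts p i t, apply_lt_succ_of_sum_le
      ((Nat.le_add_right _ _).trans ((hsum c).trans_le (Nat.sub_le n 1))) t⟩) ?_ ?_ ?_ ?_
  · exact fun _ _ => mem_univ _
  · intro c _
    have := hsum c
    simp only [mem_filter, mem_univ, true_and, Function.update_self, and_true]
    omega
  · intro e he
    ext t
    obtain rfl | ht := eq_or_ne t p
    · simp [(mem_filter.1 he).2]
    · simp [Comp.parts_ofParts, ht]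
  · intro c _
    exact Comp.eq_of_parts_eq_of_ne p fun t ht => by simp [Comp.parts_ofParts, ht]

theorem card_subComp (hn : 0 < n) (p : Fin k) :
    (subComp n k).card = (n + k - 1).choose k := by
  have hk : 0 < k := p.pos
  rw [card_eq_sum_card_fiberwise (f := fun e => (e p : ℕ)) (t := range n)
      fun e he => mem_coe.2 (mem_range.2 (lt_of_mem_subComp he p)),
    sum_congr rfl fun i hi => card_filter_subComp p (mem_range.1 hi),
    sum_range_reflect (fun i => (i + (k - 1)).choose (k - 1)) n, ← Nat.sub_add_cancel hn,
    Nat.sum_range_add_choose, Nat.sub_add_cancel hn, Nat.sub_add_cancel hk]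
  congr 1
  omega

theorem prod_subComp_succ_eq_prod_Icc (p : Fin k) (w : ℕ → M) :
    ∏ e ∈ subComp n k, w (e p + 1) = ∏ i ∈ Icc 1 n, w i ^ (n + k - i - 1).choose (k - 1) := by
  have hk : 0 < k := p.pos
  rw [← prod_fiberwise_of_maps_to' (fun e he => mem_range.2 (lt_of_mem_subComp he p))
      fun i => w (i + 1), ← Ico_add_one_right_eq_Icc, prod_Ico_eq_prod_range]
  refine prod_congr (by simp) fun i hi => ?_
  have hi : i < n := mem_range.1 hi
  rw [prod_const, card_filter_subComp p hi, add_comm i 1]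
  congr 2
  omega

end SubComp

section Columns

variable {F : Type*} [Field F] {n k : ℕ}

/-- The vector of values `∏ i, binom (x i + l i * α i, u i)` at the compositions `α` of `n`; for a
composition `u` of `n` it is a column of the matrix of the theorem. -/
noncomputable def bchVec (x l : Fin k → F) (u : Fin k → ℕ) : Comp n k → F := fun a =>
  ∏ i, bch (x i + l i * a.parts i) (u i)

/-- The vector of values `∏ i, binom (α i, u i)` at the compositions `α` of `n`. -/
def chooseVec (R : Type*) [CommRing R] (u : Fin k → ℕ) : Comp n k → R := fun a =>
  ∏ i, ((a.parts i).choose (u i) : R)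

/-- The matrix with columns `v (truncAt p j b)`, for a family of vectors `v` indexed by exponents.
It has the columns `v b` for `j ≥ n`, while for `j = 0` the exponents at `p` are ignored. -/
def truncMatrix {R : Type*} (v : (Fin k → ℕ) → Comp n k → R) (p : Fin k) (j : ℕ) :
    Matrix (Comp n k) (Comp n k) R :=
  .of fun a b => v (truncAt p j b.parts) a

theorem col_truncMatrix {R : Type*} (v : (Fin k → ℕ) → Comp n k → R) (p : Fin k) (j : ℕ)
    (b : Comp n k) : (truncMatrix v p j).col b = v (truncAt p j b.parts) := rfl

theorem det_truncMatrix_chooseVec (R : Type*) [CommRing R] (p : Fin k) :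
    (truncMatrix (chooseVec R) p 0 : Matrix (Comp n k) (Comp n k) R).det = 1 := by
  rw [det_eq_prod_diag_of_rank _ fun b : Comp n k => b.parts p]
  · refine prod_eq_one fun b _ => ?_
    rw [truncMatrix, Matrix.of_apply, chooseVec]
    refine prod_eq_one fun i _ => ?_
    obtain rfl | hi := eq_or_ne i p
    · simp [truncAt_apply_self]
    · simp [truncAt_apply_of_ne hi]
  · intro a b hab hp
    obtain ⟨i, hi⟩ : ∃ i, a.parts i < b.parts i := by
      by_contra! hle
      exact hab (Comp.eq_of_parts_le hle).symm
    have hip : i ≠ p := fun h => hp.not_gt (h ▸ hi)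
    refine prod_eq_zero (mem_univ i) ?_
    rw [truncAt_apply_of_ne hip, Nat.choose_eq_zero_of_lt hi, Nat.cast_zero]

/-- The coefficient of `bchVec x l u` in `bchVec x l (u + e_p)`, modulo the `bchVec x l (u + e_i)`
with `i ≠ p`; it is the factor that the column `u` contributes to the determinant. -/
def raiseFactor (n : ℕ) (x l : Fin k → F) (p : Fin k) (u : Fin k → ℕ) : F :=
  l p / (u p + 1) * (n + ∑ i, (x i - u i) / l i)

variable [CharZero F]

theorem sub_mul_prod_bch {ι : Type*} [Fintype ι] [DecidableEq ι] (y : ι → F) (u : ι → ℕ) (i : ι) :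
    (y i - u i) * ∏ t, bch (y t) (u t) =
      (u i + 1) * ∏ t, bch (y t) ((u + Pi.single i 1 : ι → ℕ) t) := by
  have hsplit (v : ι → ℕ) : ∏ t, bch (y t) (v t) =
      bch (y i) (v i) * ∏ t ∈ univ.erase i, bch (y t) (v t) :=
    (mul_prod_erase _ _ (mem_univ i)).symm
  rw [hsplit u, hsplit, ← mul_assoc, ← succ_mul_bch_succ, mul_assoc, Pi.add_apply,
    Pi.single_eq_same]
  congr 2
  exact prod_congr rfl fun t ht => by simp [ne_of_mem_erase ht]

theorem add_sum_div_smul_bchVec {x l : Fin k → F} (hl : ∀ i, l i ≠ 0) (u : Fin k → ℕ) :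
    ((n : F) + ∑ i, (x i - u i) / l i) • (bchVec x l u : Comp n k → F) =
      ∑ i, ((u i + 1) / l i) • bchVec x l (u + Pi.single i 1) := by
  ext a
  have hn : (n : F) = ∑ i, (a.parts i : F) := mod_cast a.sum_parts.symm
  rw [hn, ← sum_add_distrib, Pi.smul_apply, Finset.sum_apply, smul_eq_mul, sum_mul]
  refine sum_congr rfl fun i _ => ?_
  have hy : (a.parts i : F) + (x i - u i) / l i = (x i + l i * a.parts i - u i) / l i := by
    field_simp [hl i]
    ring
  rw [hy, div_mul_eq_mul_div, bchVec, sub_mul_prod_bch (fun t => x t + l t * a.parts t),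
    Pi.smul_apply, smul_eq_mul, bchVec, div_mul_eq_mul_div]

theorem bchVec_add_single_sub_smul_mem_span {x l : Fin k → F} (hl : ∀ i, l i ≠ 0) (p : Fin k)
    (u : Fin k → ℕ) :
    bchVec x l (u + Pi.single p 1) - raiseFactor n x l p u • (bchVec x l u : Comp n k → F) ∈
      Submodule.span F ((fun i => bchVec x l (u + Pi.single i 1)) '' {i | i ≠ p}) := by
  have hu : (u p : F) + 1 ≠ 0 := (u p).cast_add_one_ne_zero
  have hrel : bchVec x l (u + Pi.single p 1) -
      raiseFactor n x l p u • (bchVec x l u : Comp n k → F) =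
        -(l p / (u p + 1)) •
          ∑ i ∈ univ.erase p, ((u i + 1) / l i) • bchVec x l (u + Pi.single i 1) := by
    rw [raiseFactor, mul_smul, add_sum_div_smul_bchVec hl, ← add_sum_erase _ _ (mem_univ p),
      smul_add, smul_smul, div_mul_div_cancel₀ hu, div_self (hl p), one_smul]
    module
  rw [hrel]
  exact Submodule.smul_mem _ _ <| Submodule.sum_mem _ fun i hi => Submodule.smul_mem _ _ <|
    Submodule.subset_span ⟨i, ne_of_mem_erase hi, rfl⟩

theorem det_truncMatrix_bchVec_succ {x l : Fin k → F} (hl : ∀ i, l i ≠ 0) (p : Fin k) (j : ℕ) :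
    (truncMatrix (bchVec x l) p (j + 1) : Matrix (Comp n k) (Comp n k) F).det =
      (∏ b : Comp n k, if j < b.parts p then raiseFactor n x l p (truncAt p j b.parts) else 1) *
        (truncMatrix (bchVec x l) p j : Matrix (Comp n k) (Comp n k) F).det := by
  refine det_eq_prod_mul_det_of_col_sub_smul_mem_span (fun b => b.parts p) _ fun b => ?_
  simp only [col_truncMatrix]
  split_ifs with hj
  · rw [truncAt_succ hj]
    refine Submodule.span_mono ?_ (bchVec_add_single_sub_smul_mem_span hl p _)
    rintro _ ⟨i, hi, rfl⟩
    obtain ⟨w, hw⟩ : ∃ w, w = truncAt p j b.parts + Pi.single i 1 := ⟨_, rfl⟩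
    have hwp : w p = j := by
      simp [hw, truncAt_apply_self, hj.le, Pi.single_eq_of_ne (Ne.symm hi)]
    have hsum : ∑ t, w t + b.parts p = n + j + 1 := by
      have := b.sum_truncAt_parts_add hj.le
      simp only [hw, Pi.add_apply, sum_add_distrib, sum_pi_single', mem_univ, if_true]
      omega
    have hwn : ∑ t, w t ≤ n := by omega
    refine ⟨Comp.fill p w hwn, ?_, ?_⟩
    · have := Comp.parts_fill_self_add p w hwn
      exact (by omega : (Comp.fill p w hwn).parts p < b.parts p)
    · beta_reduce
      rw [col_truncMatrix, ← hw, ← hwp, Comp.truncAt_parts_fill]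
  · have hj : b.parts p ≤ j := not_lt.1 hj
    rw [truncAt_eq_self hj, truncAt_eq_self (hj.trans j.le_succ), one_smul, sub_self]
    exact Submodule.zero_mem _

theorem det_truncMatrix_bchVec {x l : Fin k → F} (hl : ∀ i, l i ≠ 0) (p : Fin k) (j : ℕ) :
    (truncMatrix (bchVec x l) p j : Matrix (Comp n k) (Comp n k) F).det =
      (∏ i ∈ range j, ∏ b : Comp n k,
        if i < b.parts p then raiseFactor n x l p (truncAt p i b.parts) else 1) *
      (truncMatrix (bchVec x l) p 0 : Matrix (Comp n k) (Comp n k) F).det := by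
  induction j with
  | zero => simp
  | succ j ih =>
    rw [det_truncMatrix_bchVec_succ hl, ih, prod_range_succ, mul_left_comm, mul_assoc]

theorem bchVec_sub_smul_chooseVec_mem_span {x l : Fin k → F} (hl : ∀ i, l i ≠ 0)
    (u : Fin k → ℕ) :
    bchVec x l u - (∏ i, l i ^ u i) • chooseVec F u ∈
      Submodule.span F ((chooseVec F : _ → Comp n k → F) '' Set.Iio u) := by
  choose c hc hexpand using fun i => exists_bch_add_mul_eq_sum_choose (hl i) (x i) (u i)
  have hsum : (bchVec x l u : Comp n k → F) =
      ∑ w ∈ Fintype.piFinset fun i => range (u i + 1), (∏ i, c i (w i)) • chooseVec F w := by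
    ext a
    simp only [bchVec, hexpand, prod_univ_sum, prod_mul_distrib, Finset.sum_apply, Pi.smul_apply,
      smul_eq_mul, chooseVec]
  have hu : u ∈ Fintype.piFinset fun i => range (u i + 1) := by simp
  rw [hsum, ← add_sum_erase _ _ hu, prod_congr rfl fun i _ => hc i, add_sub_cancel_left]
  refine Submodule.sum_mem _ fun w hw => Submodule.smul_mem _ _ (Submodule.subset_span ⟨w, ?_, rfl⟩)
  rw [mem_erase, Fintype.mem_piFinset] at hw
  exact lt_of_le_of_ne (fun i => Nat.lt_succ_iff.1 (mem_range.1 (hw.2 i))) hw.1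

theorem det_truncMatrix_bchVec_zero {x l : Fin k → F} (hl : ∀ i, l i ≠ 0) (p : Fin k) :
    (truncMatrix (bchVec x l) p 0 : Matrix (Comp n k) (Comp n k) F).det =
      ∏ i ∈ univ.erase p, l i ^ (subComp n k).card := by
  rw [det_eq_prod_mul_det_of_col_sub_smul_mem_span (N := truncMatrix (chooseVec F) p 0)
    (fun b : Comp n k => OrderDual.toDual (b.parts p))
    (fun b => ∏ i, l i ^ truncAt p 0 b.parts i), det_truncMatrix_chooseVec, mul_one, prod_comm,
    ← mul_prod_erase _ _ (mem_univ p)]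
  · simp only [truncAt_apply_self, Nat.min_zero, pow_zero, prod_const_one, one_mul]
    refine prod_congr rfl fun i hi => ?_
    simp only [truncAt_apply_of_ne (ne_of_mem_erase hi), prod_pow_parts_eq_pow_card_subComp]
  · intro b
    refine Submodule.span_mono ?_ (bchVec_sub_smul_chooseVec_mem_span hl _)
    rintro _ ⟨w, hw, rfl⟩
    have hwp : w p = 0 := by simpa [truncAt_apply_self] using (Set.mem_Iio.1 hw).le p
    have hsum : ∑ i, w i + b.parts p < n := by
      have := b.sum_truncAt_parts_add (Nat.zero_le (b.parts p))
      have hlt : ∑ i, w i < ∑ i, truncAt p 0 b.parts i :=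
        Fintype.sum_strictMono (Set.mem_Iio.1 hw)
      omega
    have hwn : ∑ i, w i ≤ n := by omega
    refine ⟨Comp.fill p w hwn, ?_, ?_⟩
    · have := Comp.parts_fill_self_add p w hwn
      exact OrderDual.toDual_lt_toDual.2 (by omega : b.parts p < (Comp.fill p w hwn).parts p)
    · rw [col_truncMatrix, ← hwp, Comp.truncAt_parts_fill]

end Columns

theorem stmt6 {F : Type*} [Field F] [CharZero F] (n k : ℕ) (hn : 0 < n) (hk : 0 < k)
    (x l : Fin k → F) (hl : ∀ j, l j ≠ 0) :
    Matrix.det (Matrix.of fun α β : Comp n k =>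
        ∏ i, bch (x i + l i * ((α.1 i : ℕ) : F)) ((β.1 i : ℕ))) =
      (∏ j, l j) ^ ((n + k - 1).choose k) *
        (∏ ε ∈ Finset.univ.filter (fun f : Fin k → Fin (n + 1) => ∑ i, (f i : ℕ) < n),
          ((n : F) + ∑ j, (x j - ((ε j : ℕ) : F)) / l j)) /
        ∏ i ∈ Finset.Icc 1 n, (i : F) ^ ((n + k - i - 1).choose (k - 1)) := by
  let p : Fin k := ⟨0, hk⟩
  have hmatrix : (Matrix.of fun α β : Comp n k =>
      ∏ i, bch (x i + l i * ((α.1 i : ℕ) : F)) ((β.1 i : ℕ))) = truncMatrix (bchVec x l) p n := by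
    ext a b
    rw [truncMatrix, Matrix.of_apply, Matrix.of_apply, truncAt_eq_self (b.parts_le p)]
    rfl
  have hdenom := prod_subComp_succ_eq_prod_Icc (n := n) p (Nat.cast : ℕ → F)
  push_cast at hdenom
  rw [hmatrix, det_truncMatrix_bchVec hl, det_truncMatrix_bchVec_zero hl,
    prod_truncAt_parts_eq_prod_subComp p (raiseFactor n x l p)]
  simp only [raiseFactor]
  rw [prod_mul_distrib, prod_div_distrib, prod_const, hdenom, ← card_subComp hn p, ← prod_pow,
    ← mul_prod_erase _ _ (mem_univ p)]
  ring
end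

section
/- For vectors of indeterminates x = (x_1,...,x_k) and λ = (λ_1,...,λ_k), and positive integers n, k, the determinant of the matrix indexed by compositions α, β of n into k non-negative parts, with entry ∏_{i=1}^k binom(x_i+λ_i α_i+β_i, β_i), equals (∏_{j=1}^k λ_j)^{binom(n+k-1,k)} times the product over all non-negative integer vectors (ε_1,...,ε_k) with ε_1+···+ε_k < n of (n + Σ_{j=1}^k (x_j+1+ε_j)/λ_j), divided by ∏_{i=1}^n i^{binom(n+k-i-1,k-1)}. -/
open Finset

/-!
Up to the factorials `∏ i, (β i)!` in the columns, the entries are products of rising factorials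
`∏ i, (u i + l i * α i)^{(β i)}` with `u = x + 1`. Write `M α ε` for such a product, with `ε` any
vector of exponents. Since `∑ i, α i = n`, the recursion `y^{(b + 1)} = y^{(b)} (y + b)` gives
`∑ i, (l i)⁻¹ * M α (ε + eᵢ) = (n + ∑ i, (u i + ε i) / l i) * M α ε`,
where the factor on the right does not depend on the row `α`. So column operations extract the
linear factors while lowering the exponent of the coordinate `0`, until that coordinate no longer
occurs. What is left is a multivariate Vandermonde matrix indexed by a lower set in the other
coordinates. Newton's forward difference formula factors it into a lower triangular matrix of
binomial coefficients and an upper triangular matrix of forward differences.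
-/

open Polynomial fwdDiff
open scoped Nat

section Triangular

variable {m α R : Type*} [Fintype m] [DecidableEq m] [LinearOrder α] [CommRing R]

theorem det_eq_prod_diag_of_lt {M : Matrix m m R} (b : m → α)
    (h : ∀ i j, i ≠ j → M i j ≠ 0 → b i < b j) : M.det = ∏ i, M i i := by
  have triangular : M.BlockTriangular b := fun i j hji => by
    by_contra hM
    exact hji.not_gt (h i j (fun hij => hji.ne (hij ▸ rfl)) hM)
  have block_det (a : α) : (M.toSquareBlock b a).det = ∏ i : {i // b i = a}, M i i := by
    have block_diagonal : M.toSquareBlock b a =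
        Matrix.diagonal fun i : {i // b i = a} => M i i := by
      ext i j
      by_cases hij : i = j
      · simp [hij, Matrix.toSquareBlock_def]
      · rw [Matrix.diagonal_apply_ne _ hij]
        by_contra hM
        exact (h i j (Subtype.coe_ne_coe.2 hij) hM).ne (i.2.trans j.2.symm)
    rw [block_diagonal, Matrix.det_diagonal]
  rw [triangular.det, ← prod_fiberwise_of_maps_to fun i _ => mem_image_of_mem b (mem_univ i)]
  exact prod_congr rfl fun a _ => (block_det a).trans (prod_subtype _ (by simp) fun i => M i i).symm

end Triangular

section Vandermonde

variable {R : Type*} [CommRing R]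

theorem fwdDiff_iter_eval_of_natDegree_le {p : R[X]} {b : ℕ} (hp : p.natDegree ≤ b) :
    Δ_[1] ^[b] p.eval 0 = b ! * p.coeff b := by
  obtain rfl | hlt := hp.eq_or_lt
  · rw [p.fwdDiff_iter_degree_eq_factorial]
    simp [mul_comm]
  · simp [fwdDiff_iter_eq_zero_of_degree_lt hlt, coeff_eq_zero_of_natDegree_lt hlt]

theorem eval_natCast_eq_sum_choose_mul_fwdDiff {p : R[X]} {b : ℕ} (hp : p.natDegree ≤ b) (a : ℕ) :
    p.eval (a : R) = ∑ g ∈ range (b + 1), (a.choose g : R) * Δ_[1] ^[g] p.eval 0 := by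
  have newton : p.eval (a : R) = ∑ g ∈ range (a + 1), (a.choose g : R) * Δ_[1] ^[g] p.eval 0 := by
    simpa using shift_eq_sum_fwdDiff_iter 1 p.eval a 0
  rw [newton]
  obtain hab | hba := le_total a b
  · refine sum_subset (range_mono (Nat.succ_le_succ hab)) fun g _ hg => ?_
    rw [Nat.choose_eq_zero_of_lt (by simpa using hg)]
    simp
  · refine (sum_subset (range_mono (Nat.succ_le_succ hba)) fun g _ hg => ?_).symm
    have : p.natDegree < g := hp.trans_lt (by simpa using hg)
    simp [fwdDiff_iter_eq_zero_of_degree_lt this]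

variable {κ : Type*} [Fintype κ]

theorem det_prod_choose (T : Finset (κ → ℕ)) :
    (Matrix.of fun γ η : T => ∏ i, ((γ.1 i).choose (η.1 i) : R)).det = 1 := by
  rw [← Matrix.det_transpose, det_eq_prod_diag_of_lt fun γ : T => ∑ i, γ.1 i]
  · simp
  · intro η γ hne hchoose
    refine Fintype.sum_strictMono (lt_of_le_of_ne (fun i => ?_) (Subtype.coe_ne_coe.2 hne))
    by_contra! hlt
    exact hchoose (prod_eq_zero (mem_univ i) (by simp [Nat.choose_eq_zero_of_lt hlt]))

theorem det_prod_fwdDiff (T : Finset (κ → ℕ)) {p : κ → ℕ → R[X]}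
    (hp : ∀ i b, (p i b).natDegree ≤ b) :
    (Matrix.of fun η δ : T => ∏ i, Δ_[1] ^[η.1 i] (p i (δ.1 i)).eval 0).det =
      ∏ δ ∈ T, ∏ i, ((δ i)! * (p i (δ i)).coeff (δ i)) := by
  rw [det_eq_prod_diag_of_lt fun γ : T => ∑ i, γ.1 i]
  · simp_rw [Matrix.of_apply, fwdDiff_iter_eval_of_natDegree_le (hp _ _)]
    exact prod_coe_sort T fun δ => ∏ i, ((δ i)! * (p i (δ i)).coeff (δ i))
  · intro η δ hne hdiff
    refine Fintype.sum_strictMono (lt_of_le_of_ne (fun i => ?_) (Subtype.coe_ne_coe.2 hne))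
    by_contra! hlt
    refine hdiff (prod_eq_zero (mem_univ i) ?_)
    rw [fwdDiff_iter_eq_zero_of_degree_lt ((hp _ _).trans_lt hlt), Pi.zero_apply]

theorem det_prod_eval_of_isLowerSet {T : Finset (κ → ℕ)} (hT : IsLowerSet (T : Set (κ → ℕ)))
    {p : κ → ℕ → R[X]} (hp : ∀ i b, (p i b).natDegree ≤ b) :
    (Matrix.of fun γ δ : T => ∏ i, (p i (δ.1 i)).eval (γ.1 i : R)).det =
      ∏ δ ∈ T, ∏ i, ((δ i)! * (p i (δ i)).coeff (δ i)) := by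
  classical
  have factorization : (Matrix.of fun γ δ : T => ∏ i, (p i (δ.1 i)).eval (γ.1 i : R)) =
      (Matrix.of fun γ η : T => ∏ i, ((γ.1 i).choose (η.1 i) : R)) *
        Matrix.of fun η δ : T => ∏ i, Δ_[1] ^[η.1 i] (p i (δ.1 i)).eval 0 := by
    ext γ δ
    let box := Fintype.piFinset fun i => range (δ.1 i + 1)
    let term (η : κ → ℕ) : R := ∏ i, ((γ.1 i).choose (η i) * Δ_[1] ^[η i] (p i (δ.1 i)).eval 0)
    have box_subset : box ⊆ T := fun η hη =>
      hT (fun i => by simpa [Nat.lt_succ_iff] using Fintype.mem_piFinset.1 hη i) δ.2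
    have term_eq_zero (η : κ → ℕ) (hη : η ∉ box) : term η = 0 := by
      simp only [box, Fintype.mem_piFinset, mem_range, not_forall, not_lt] at hη
      obtain ⟨i, hi⟩ := hη
      refine prod_eq_zero (mem_univ i) ?_
      rw [fwdDiff_iter_eq_zero_of_degree_lt ((hp _ _).trans_lt hi), Pi.zero_apply, mul_zero]
    calc ∏ i, (p i (δ.1 i)).eval (γ.1 i : R)
        = ∑ η ∈ box, term η := by
          simp_rw [eval_natCast_eq_sum_choose_mul_fwdDiff (hp _ _), prod_univ_sum, box, term]
      _ = ∑ η ∈ T, term η := sum_subset box_subset fun η _ => term_eq_zero η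
      _ = ∑ η : T, term η := (sum_coe_sort T term).symm
      _ = _ := by simp only [Matrix.mul_apply, Matrix.of_apply, term, prod_mul_distrib]
  rw [factorization, Matrix.det_mul, det_prod_choose, one_mul, det_prod_fwdDiff T hp]

end Vandermonde

section BigOperators

theorem prod_range_ite_add_lt {M : Type*} [CommMonoid M] (d n : ℕ) (f : ℕ → M) :
    ∏ s ∈ range n, (if d + s < n then f s else 1) = ∏ s ∈ range (n - d), f s := by
  rw [← prod_filter]
  refine prod_congr ?_ fun _ _ => rfl
  ext s
  simp only [mem_filter, mem_range]
  lia

theorem sum_add_single_one {κ : Type*} [Fintype κ] [DecidableEq κ] (δ : κ → ℕ) (j : κ) :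
    ∑ i, (δ + Pi.single j 1 : κ → ℕ) i = ∑ i, δ i + 1 := by
  simp [sum_add_distrib]

end BigOperators

section NatSimplex

/-- The lattice points of a simplex: vectors of natural numbers with sum *strictly less than* `n`.
For `k + 1` coordinates and parameter `n` this is the index set of the linear factors, while the
compositions of `n` into `k + 1` parts are parametrised by `natSimplex (Fin k) (n + 1)`. -/
def natSimplex (κ : Type*) [Fintype κ] [DecidableEq κ] (n : ℕ) : Finset (κ → ℕ) :=
  {γ ∈ Fintype.piFinset fun _ => range n | ∑ i, γ i < n}

variable {κ : Type*} [Fintype κ] [DecidableEq κ] {n : ℕ}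

theorem mem_natSimplex {γ : κ → ℕ} : γ ∈ natSimplex κ n ↔ ∑ i, γ i < n := by
  simp only [natSimplex, mem_filter, Fintype.mem_piFinset, mem_range, and_iff_right_iff_imp]
  exact fun h i => (single_le_sum (fun _ _ => Nat.zero_le _) (mem_univ i)).trans_lt h

theorem isLowerSet_natSimplex : IsLowerSet (natSimplex κ n : Set (κ → ℕ)) := by
  intro δ γ hγδ hδ
  rw [mem_coe, mem_natSimplex] at hδ ⊢
  exact (sum_le_sum fun i _ => hγδ i).trans_lt hδ

@[to_additive]
theorem prod_natSimplex_prod_range {M : Type*} [CommMonoid M] (g : ℕ → M) :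
    ∏ δ ∈ natSimplex κ (n + 1), ∏ e ∈ range (n - ∑ i, δ i), g e =
      ∏ e ∈ range n, g e ^ #(natSimplex κ (n - e)) := by
  simp_rw [← prod_const]
  refine prod_comm' fun δ e => ?_
  simp only [mem_natSimplex, mem_range]
  lia

/-- Replacing `δ i` by the slack `n - ∑ j, δ j` is an involution of the simplex. -/
theorem sum_natSimplex_apply (i : κ) :
    ∑ δ ∈ natSimplex κ (n + 1), δ i = ∑ δ ∈ natSimplex κ (n + 1), (n - ∑ j, δ j) := by
  let reflect (δ : κ → ℕ) : κ → ℕ := Function.update δ i (n - ∑ j, δ j)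
  have sum_reflect {δ : κ → ℕ} (hδ : δ ∈ natSimplex κ (n + 1)) : ∑ j, reflect δ j = n - δ i := by
    rw [mem_natSimplex, ← add_sum_erase univ δ (mem_univ i)] at hδ
    rw [sum_update_of_mem (mem_univ i), sdiff_singleton_eq_erase,
      ← add_sum_erase univ δ (mem_univ i)]
    lia
  have apply_le {δ : κ → ℕ} (hδ : δ ∈ natSimplex κ (n + 1)) : δ i ≤ n :=
    (single_le_sum (fun _ _ => Nat.zero_le _) (mem_univ i)).trans
      (Nat.lt_succ_iff.1 (mem_natSimplex.1 hδ))
  have mapsTo (δ) (hδ : δ ∈ natSimplex κ (n + 1)) : reflect δ ∈ natSimplex κ (n + 1) := by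
    rw [mem_natSimplex, sum_reflect hδ]
    lia
  have involutive (δ) (hδ : δ ∈ natSimplex κ (n + 1)) : reflect (reflect δ) = δ := by
    rw [show reflect (reflect δ) = Function.update (reflect δ) i (n - ∑ j, reflect δ j) from rfl,
      sum_reflect hδ, Nat.sub_sub_self (apply_le hδ), Function.update_idem,
      Function.update_eq_self]
  refine sum_nbij' reflect reflect mapsTo mapsTo involutive involutive fun δ hδ => ?_
  rw [sum_reflect hδ, Nat.sub_sub_self (apply_le hδ)]

theorem prod_natSimplex_pow_apply {M : Type*} [CommMonoid M] (a : M) (i : κ) :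
    ∏ δ ∈ natSimplex κ (n + 1), a ^ δ i = a ^ ∑ δ ∈ natSimplex κ (n + 1), (n - ∑ j, δ j) := by
  rw [prod_pow_eq_pow_sum, sum_natSimplex_apply]

@[to_additive]
theorem prod_natSimplex_fin_succ {k : ℕ} {M : Type*} [CommMonoid M] (f : (Fin (k + 1) → ℕ) → M) :
    ∏ ε ∈ natSimplex (Fin (k + 1)) n, f ε =
      ∏ δ ∈ natSimplex (Fin k) (n + 1), ∏ e ∈ range (n - ∑ i, δ i),
        f (Fin.cons e δ : Fin (k + 1) → ℕ) := by
  rw [prod_sigma']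
  refine prod_bij' (fun ε _ => ⟨Fin.tail ε, ε 0⟩) (fun p _ => Fin.cons p.2 p.1)
    (fun ε hε => ?_) (fun p hp => ?_) (fun ε _ => by simp) (fun p _ => by simp)
    (fun ε _ => by simp)
  · simp only [mem_natSimplex, Fin.sum_univ_succ, mem_sigma, mem_range, Fin.tail] at hε ⊢
    lia
  · simp only [mem_natSimplex, mem_sigma, mem_range] at hp
    simp only [mem_natSimplex, Fin.sum_univ_succ, Fin.cons_zero, Fin.cons_succ]
    lia

theorem card_natSimplex_fin_succ (k n : ℕ) :
    #(natSimplex (Fin (k + 1)) n) = ∑ δ ∈ natSimplex (Fin k) (n + 1), (n - ∑ i, δ i) := by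
  rw [card_eq_sum_ones, sum_natSimplex_fin_succ]
  simp

theorem card_natSimplex_fin (k n : ℕ) : #(natSimplex (Fin k) (n + 1)) = (n + k).choose k := by
  induction k generalizing n with
  | zero =>
    have : natSimplex (Fin 0) (n + 1) = {0} := by
      ext γ
      simp [mem_natSimplex, Subsingleton.elim γ 0]
    simp [this]
  | succ k ih =>
    calc #(natSimplex (Fin (k + 1)) (n + 1))
        = ∑ e ∈ range (n + 1), #(natSimplex (Fin k) (n + 1 - e)) := by
          rw [card_natSimplex_fin_succ]
          simpa using sum_natSimplex_sum_range (κ := Fin k) (n := n + 1) fun _ => (1 : ℕ)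
      _ = ∑ e ∈ range (n + 1), (n - e + k).choose k := by
          refine sum_congr rfl fun e he => ?_
          rw [Nat.sub_add_comm (mem_range_succ_iff.1 he), ih]
      _ = ∑ i ∈ range (n + 1), (i + k).choose k :=
          sum_range_reflect (fun i => (i + k).choose k) (n + 1)
      _ = (n + (k + 1)).choose (k + 1) := Nat.sum_range_add_choose n k

theorem prod_natSimplex_factorial (n k : ℕ) :
    ∏ δ ∈ natSimplex (Fin k) (n + 1), (n - ∑ i, δ i)! =
      ∏ i ∈ Icc 1 n, i ^ (n + k - i).choose k := by
  have multiplicity {e : ℕ} (he : e ∈ range n) :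
      #(natSimplex (Fin k) (n - e)) = (n + k - (e + 1)).choose k := by
    have he : e < n := mem_range.1 he
    rw [show n - e = n - (e + 1) + 1 by lia, card_natSimplex_fin, Nat.sub_add_comm he]
  simp_rw [← prod_range_add_one_eq_factorial]
  rw [prod_natSimplex_prod_range, ← Ico_add_one_right_eq_Icc, ← zero_add 1,
    ← prod_Ico_add' _ 0 n 1, ← range_eq_Ico]
  exact prod_congr rfl fun e he => by rw [multiplicity he]

theorem prod_filter_fin_eq_prod_natSimplex {k : ℕ} {M : Type*} [CommMonoid M]
    (f : (Fin k → ℕ) → M) :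
    ∏ ε : Fin k → Fin (n + 1) with ∑ i, (ε i : ℕ) < n, f (fun i => ε i) =
      ∏ ε ∈ natSimplex (Fin k) n, f ε := by
  refine prod_bij (fun ε _ i => ε i) (fun ε hε => ?_) (fun ε _ ε' _ h => ?_) (fun ε hε => ?_)
    (fun _ _ => rfl)
  · exact mem_natSimplex.2 (mem_filter.1 hε).2
  · exact funext fun i => Fin.ext (congrFun h i)
  · have lt_succ (i : Fin k) : ε i < n + 1 :=
      (single_le_sum (fun _ _ => Nat.zero_le _) (mem_univ i)).trans_lt
        ((mem_natSimplex.1 hε).trans n.lt_succ_self)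
    exact ⟨fun i => ⟨ε i, lt_succ i⟩, by simpa using mem_natSimplex.1 hε, rfl⟩

end NatSimplex

section RisingProd

variable {R κ : Type*} [CommSemiring R] [Fintype κ]

/-- The product `∏ i, (u i + l i * a i)^{(δ i)}` of rising factorials: the numerator of
`∏ i, binom(x i + l i * a i + δ i, δ i)` for `u = x + 1`. -/
noncomputable def risingProd (u l a : κ → R) (δ : κ → ℕ) : R :=
  ∏ i, (ascPochhammer R (δ i)).eval (u i + l i * a i)

theorem risingProd_add_single [DecidableEq κ] (u l a : κ → R) (δ : κ → ℕ) (j : κ) :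
    risingProd u l a (δ + Pi.single j 1) = risingProd u l a δ * (u j + l j * a j + δ j) := by
  have unchanged : ∀ i ∈ univ.erase j,
      (ascPochhammer R ((δ + Pi.single j 1 : κ → ℕ) i)).eval (u i + l i * a i) =
        (ascPochhammer R (δ i)).eval (u i + l i * a i) := fun i hi => by
    rw [Pi.add_apply, Pi.single_eq_of_ne (ne_of_mem_erase hi), add_zero]
  rw [risingProd, risingProd, ← mul_prod_erase univ _ (mem_univ j), prod_congr rfl unchanged,
    Pi.add_apply, Pi.single_eq_same, ascPochhammer_succ_eval, mul_right_comm,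
    mul_prod_erase univ (fun i => (ascPochhammer R (δ i)).eval (u i + l i * a i)) (mem_univ j)]

end RisingProd

section LoweredMatrix

variable {R κ : Type*} [CommRing R] [Fintype κ] [DecidableEq κ]

/-- The product `(u₀ + l₀ (n - |γ|))^{(n - |δ| - s)} ∏ i, (u i + l i * γ i)^{(δ i)}` of rising
factorials. The coordinates `n - |γ|` and `n - |δ|` complete `γ` and `δ` to compositions of `n`; the
exponent of the completing coordinate is lowered by `s`, truncated at `0`. -/
noncomputable def loweredEntry (n : ℕ) (u₀ l₀ : R) (u l : κ → R) (s : ℕ) (γ δ : κ → ℕ) : R :=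
  (ascPochhammer R (n - ∑ i, δ i - s)).eval (u₀ + l₀ * (n - ∑ i, γ i : ℕ)) *
    risingProd u l (fun i => γ i) δ

/-- The matrices that the elimination passes through: for `s = 0` this is, up to factorials in the
columns, the matrix of products of binomial coefficients, and for `s = n` it is a multivariate
Vandermonde matrix. -/
noncomputable def loweredMatrix (n : ℕ) (u₀ l₀ : R) (u l : κ → R) (s : ℕ) :
    Matrix (natSimplex κ (n + 1)) (natSimplex κ (n + 1)) R :=
  .of fun γ δ => loweredEntry n u₀ l₀ u l s γ δ

variable [IsDomain R]

theorem natDegree_ascPochhammer_comp_linear_le (u l : R) (b : ℕ) :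
    ((ascPochhammer R b).comp (C l * X + C u)).natDegree ≤ b := by
  calc ((ascPochhammer R b).comp (C l * X + C u)).natDegree
      ≤ (ascPochhammer R b).natDegree * (C l * X + C u).natDegree := natDegree_comp_le
    _ ≤ b * 1 := by
        rw [ascPochhammer_natDegree]
        exact Nat.mul_le_mul_left b natDegree_linear_le
    _ = b := mul_one b

theorem coeff_ascPochhammer_comp_linear (u l : R) (b : ℕ) :
    ((ascPochhammer R b).comp (C l * X + C u)).coeff b = l ^ b := by
  obtain rfl | hl := eq_or_ne l 0
  · cases b <;> simp [coeff_C_succ]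
  · have := coeff_comp_degree_mul_degree (p := ascPochhammer R b) (q := C l * X + C u)
      (by simp [natDegree_linear hl])
    simpa [natDegree_linear hl, leadingCoeff_linear hl, ascPochhammer_natDegree,
      (monic_ascPochhammer R b).leadingCoeff] using this

theorem det_loweredMatrix_self (n : ℕ) (u₀ l₀ : R) (u l : κ → R) :
    (loweredMatrix n u₀ l₀ u l n).det = ∏ δ ∈ natSimplex κ (n + 1), ∏ i, ((δ i)! * l i ^ δ i) := by
  let p (i : κ) (b : ℕ) : R[X] := (ascPochhammer R b).comp (C (l i) * X + C (u i))
  have lowered_eq : loweredMatrix n u₀ l₀ u l n =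
      .of fun γ δ => ∏ i, (p i (δ.1 i)).eval (γ.1 i : R) := by
    ext γ δ
    have exponent : n - ∑ i, δ.1 i - n = 0 := by lia
    simp only [loweredMatrix, loweredEntry, Matrix.of_apply, exponent, risingProd, p]
    simp [add_comm]
  rw [lowered_eq, det_prod_eval_of_isLowerSet isLowerSet_natSimplex
    fun i b => natDegree_ascPochhammer_comp_linear_le (u i) (l i) b]
  exact prod_congr rfl fun δ _ => prod_congr rfl fun i _ => by
    rw [coeff_ascPochhammer_comp_linear]

end LoweredMatrix

section Elimination

variable {F κ : Type*} [Field F] [Fintype κ]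

theorem sum_inv_mul_risingProd_add_single [DecidableEq κ] {l : κ → F} (hl : ∀ i, l i ≠ 0)
    (u a : κ → F) (δ : κ → ℕ) :
    ∑ j, (l j)⁻¹ * risingProd u l a (δ + Pi.single j 1) =
      (∑ j, (a j + (u j + δ j) / l j)) * risingProd u l a δ := by
  rw [sum_mul]
  refine sum_congr rfl fun j _ => ?_
  have := hl j
  rw [risingProd_add_single]
  field_simp
  ring

theorem inv_mul_ascPochhammer_succ_eval {l : F} (hl : l ≠ 0) (u a : F) (e : ℕ) :
    l⁻¹ * (ascPochhammer F (e + 1)).eval (u + l * a) =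
      (a + (u + e) / l) * (ascPochhammer F e).eval (u + l * a) := by
  rw [ascPochhammer_succ_eval]
  field_simp
  ring

/-- The factor `n + ∑ j, (x j + 1 + ε j) / l j` of the determinant, for `ε = (e, δ)` and
`u = x + 1`. -/
noncomputable def linearFactor (n : ℕ) (u₀ l₀ : F) (u l : κ → F) (e : ℕ) (δ : κ → ℕ) : F :=
  n + (u₀ + e) / l₀ + ∑ i, (u i + δ i) / l i

theorem linearFactor_mul [DecidableEq κ] {n : ℕ} {l₀ : F} {l : κ → F} (hl₀ : l₀ ≠ 0)
    (hl : ∀ i, l i ≠ 0) (u₀ : F) (u : κ → F) {a₀ : F} {a : κ → F} (ha : a₀ + ∑ i, a i = n)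
    (e : ℕ) (δ : κ → ℕ) :
    linearFactor n u₀ l₀ u l e δ *
        ((ascPochhammer F e).eval (u₀ + l₀ * a₀) * risingProd u l a δ) =
      l₀⁻¹ * ((ascPochhammer F (e + 1)).eval (u₀ + l₀ * a₀) * risingProd u l a δ) +
        ∑ j, (l j)⁻¹ *
          ((ascPochhammer F e).eval (u₀ + l₀ * a₀) * risingProd u l a (δ + Pi.single j 1)) := by
  simp_rw [mul_left_comm (l _)⁻¹, ← mul_sum, ← mul_assoc l₀⁻¹,
    sum_inv_mul_risingProd_add_single hl, inv_mul_ascPochhammer_succ_eval hl₀, linearFactor, ← ha,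
    sum_add_distrib]
  ring

variable [DecidableEq κ]

theorem linearFactor_mul_loweredEntry {n : ℕ} {l₀ : F} {l : κ → F} (hl₀ : l₀ ≠ 0)
    (hl : ∀ i, l i ≠ 0) (u₀ : F) (u : κ → F) {s : ℕ} {γ δ : κ → ℕ} (hγ : ∑ i, γ i ≤ n)
    (hδ : ∑ i, δ i + s < n) :
    linearFactor n u₀ l₀ u l (n - ∑ i, δ i - (s + 1)) δ * loweredEntry n u₀ l₀ u l (s + 1) γ δ =
      l₀⁻¹ * loweredEntry n u₀ l₀ u l s γ δ +
        ∑ j, (l j)⁻¹ * loweredEntry n u₀ l₀ u l s γ (δ + Pi.single j 1) := by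
  have sum_row : ((n - ∑ i, γ i : ℕ) : F) + ∑ i, (γ i : F) = n := by
    rw [← Nat.cast_sum, ← Nat.cast_add, Nat.sub_add_cancel hγ]
  have exponent : n - ∑ i, δ i - s = n - ∑ i, δ i - (s + 1) + 1 := by lia
  have neighbour_exponent (j : κ) :
      n - ∑ i, (δ + Pi.single j 1 : κ → ℕ) i - s = n - ∑ i, δ i - (s + 1) := by
    rw [sum_add_single_one]
    lia
  simp_rw [loweredEntry, neighbour_exponent, exponent]
  exact linearFactor_mul hl₀ hl u₀ u sum_row _ δ

/-- The column operations that replace the column `δ` of `loweredMatrix n u₀ l₀ u l s` by the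
combination, with coefficients `1 / l`, of itself and its neighbours `δ + eⱼ`. The columns whose
completing exponent has already been lowered to `0` are left alone. -/
def eliminationMatrix (n : ℕ) (l₀ : F) (l : κ → F) (s : ℕ) :
    Matrix (natSimplex κ (n + 1)) (natSimplex κ (n + 1)) F :=
  .of fun γ δ =>
    if ∑ i, δ.1 i + s < n then
      (if γ = δ then l₀⁻¹ else 0) + ∑ j, if γ.1 = δ.1 + Pi.single j 1 then (l j)⁻¹ else 0
    else if γ = δ then 1 else 0

theorem det_eliminationMatrix (n : ℕ) (l₀ : F) (l : κ → F) (s : ℕ) :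
    (eliminationMatrix n l₀ l s).det =
      ∏ δ ∈ natSimplex κ (n + 1), if ∑ i, δ i + s < n then l₀⁻¹ else 1 := by
  rw [← Matrix.det_transpose, det_eq_prod_diag_of_lt fun γ => ∑ i, γ.1 i]
  · refine Eq.trans (prod_congr rfl fun δ _ => ?_) (prod_coe_sort (natSimplex κ (n + 1)) fun δ =>
      if ∑ i, δ i + s < n then l₀⁻¹ else 1)
    simp [eliminationMatrix]
  · intro δ γ hne hentry
    suffices ∃ j, γ.1 = δ.1 + Pi.single j 1 by
      obtain ⟨j, hj⟩ := this
      rw [hj, sum_add_single_one]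
      exact Nat.lt_succ_self _
    by_contra! h
    simp [eliminationMatrix, hne.symm, h] at hentry

theorem loweredMatrix_mul_eliminationMatrix {n : ℕ} {l₀ : F} {l : κ → F} (hl₀ : l₀ ≠ 0)
    (hl : ∀ i, l i ≠ 0) (u₀ : F) (u : κ → F) (s : ℕ) :
    loweredMatrix n u₀ l₀ u l s * eliminationMatrix n l₀ l s =
      loweredMatrix n u₀ l₀ u l (s + 1) * Matrix.diagonal fun δ : natSimplex κ (n + 1) =>
        if ∑ i, δ.1 i + s < n then linearFactor n u₀ l₀ u l (n - ∑ i, δ.1 i - (s + 1)) δ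
        else 1 := by
  ext γ δ
  rw [Matrix.mul_diagonal, Matrix.mul_apply]
  simp only [loweredMatrix, eliminationMatrix, Matrix.of_apply]
  split_ifs with hs
  · have neighbour (j : κ) : ∑ η : natSimplex κ (n + 1), loweredEntry n u₀ l₀ u l s γ η *
        (if η.1 = δ.1 + Pi.single j 1 then (l j)⁻¹ else 0) =
          loweredEntry n u₀ l₀ u l s γ (δ.1 + Pi.single j 1) * (l j)⁻¹ := by
      have hmem : δ.1 + Pi.single j 1 ∈ natSimplex κ (n + 1) := by
        rw [mem_natSimplex, sum_add_single_one]
        lia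
      refine (sum_coe_sort (natSimplex κ (n + 1)) fun η => loweredEntry n u₀ l₀ u l s γ η *
        (if η = δ.1 + Pi.single j 1 then (l j)⁻¹ else 0)).trans ?_
      simp [hmem]
    simp_rw [mul_add, mul_sum, sum_add_distrib]
    rw [sum_comm]
    simp_rw [neighbour, mul_ite, mul_zero, sum_ite_eq', mem_univ, if_true]
    rw [mul_comm _ (linearFactor ..), linearFactor_mul_loweredEntry hl₀ hl u₀ u
      (Nat.lt_succ_iff.1 (mem_natSimplex.1 γ.2)) hs]
    simp [mul_comm]
  · simp [loweredEntry, show n - ∑ i, δ.1 i - s = 0 by lia,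
      show n - ∑ i, δ.1 i - (s + 1) = 0 by lia]

theorem det_loweredMatrix_succ {n : ℕ} {l₀ : F} {l : κ → F} (hl₀ : l₀ ≠ 0) (hl : ∀ i, l i ≠ 0)
    (u₀ : F) (u : κ → F) (s : ℕ) :
    (loweredMatrix n u₀ l₀ u l s).det *
        ∏ δ ∈ natSimplex κ (n + 1), (if ∑ i, δ i + s < n then l₀⁻¹ else 1) =
      (loweredMatrix n u₀ l₀ u l (s + 1)).det *
        ∏ δ ∈ natSimplex κ (n + 1), if ∑ i, δ i + s < n then
          linearFactor n u₀ l₀ u l (n - ∑ i, δ i - (s + 1)) δ else 1 := by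
  rw [← det_eliminationMatrix, ← Matrix.det_mul, loweredMatrix_mul_eliminationMatrix hl₀ hl,
    Matrix.det_mul, Matrix.det_diagonal, ← prod_coe_sort (natSimplex κ (n + 1))]

theorem det_loweredMatrix_zero_mul {n : ℕ} {l₀ : F} {l : κ → F} (hl₀ : l₀ ≠ 0) (hl : ∀ i, l i ≠ 0)
    (u₀ : F) (u : κ → F) (t : ℕ) :
    (loweredMatrix n u₀ l₀ u l 0).det *
        ∏ s ∈ range t, ∏ δ ∈ natSimplex κ (n + 1), (if ∑ i, δ i + s < n then l₀⁻¹ else 1) =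
      (loweredMatrix n u₀ l₀ u l t).det *
        ∏ s ∈ range t, ∏ δ ∈ natSimplex κ (n + 1), if ∑ i, δ i + s < n then
          linearFactor n u₀ l₀ u l (n - ∑ i, δ i - (s + 1)) δ else 1 := by
  induction t with
  | zero => simp
  | succ t ih =>
    rw [prod_range_succ, prod_range_succ, ← mul_assoc, ih, mul_right_comm,
      det_loweredMatrix_succ hl₀ hl, mul_assoc, mul_comm (∏ δ ∈ _, _)]

theorem det_loweredMatrix_zero {n : ℕ} {l₀ : F} {l : κ → F} (hl₀ : l₀ ≠ 0) (hl : ∀ i, l i ≠ 0)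
    (u₀ : F) (u : κ → F) :
    (loweredMatrix n u₀ l₀ u l 0).det =
      (l₀ * ∏ i, l i) ^ (∑ δ ∈ natSimplex κ (n + 1), (n - ∑ i, δ i)) *
        (∏ δ ∈ natSimplex κ (n + 1), ∏ i, ((δ i)! : F)) *
        ∏ δ ∈ natSimplex κ (n + 1), ∏ e ∈ range (n - ∑ i, δ i), linearFactor n u₀ l₀ u l e δ := by
  have elimination := det_loweredMatrix_zero_mul (n := n) hl₀ hl u₀ u n
  simp_rw [prod_comm (s := range n), prod_range_ite_add_lt] at elimination
  have pivots : ∏ δ ∈ natSimplex κ (n + 1), ∏ _s ∈ range (n - ∑ i, δ i), l₀⁻¹ =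
      (l₀ ^ ∑ δ ∈ natSimplex κ (n + 1), (n - ∑ i, δ i))⁻¹ := by
    simp_rw [prod_const, card_range, prod_pow_eq_pow_sum, inv_pow]
  have factors (δ : κ → ℕ) : ∏ s ∈ range (n - ∑ i, δ i),
      linearFactor n u₀ l₀ u l (n - ∑ i, δ i - (s + 1)) δ =
        ∏ e ∈ range (n - ∑ i, δ i), linearFactor n u₀ l₀ u l e δ := by
    simp_rw [add_comm _ 1, Nat.sub_add_eq]
    exact prod_range_reflect (fun e => linearFactor n u₀ l₀ u l e δ) _
  have leading : (loweredMatrix n u₀ l₀ u l n).det =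
      (∏ i, l i) ^ (∑ δ ∈ natSimplex κ (n + 1), (n - ∑ i, δ i)) *
        ∏ δ ∈ natSimplex κ (n + 1), ∏ i, ((δ i)! : F) := by
    simp_rw [det_loweredMatrix_self n u₀ l₀ u l, prod_mul_distrib, mul_comm]
    rw [prod_comm (f := fun (δ : κ → ℕ) i => l i ^ δ i)]
    simp_rw [prod_natSimplex_pow_apply, prod_pow]
  simp_rw [factors] at elimination
  rw [pivots, mul_inv_eq_iff_eq_mul₀ (pow_ne_zero _ hl₀), leading] at elimination
  rw [elimination]
  ring

end Elimination

section Compositions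

/-- Forgetting the part `α 0` of a composition `α` of `n`, which is recovered as `n` minus the sum
of the others. -/
def compEquivNatSimplex (n k : ℕ) : Comp n (k + 1) ≃ natSimplex (Fin k) (n + 1) where
  toFun α := ⟨fun i => α.1 i.succ, by
    have := α.2
    rw [Fin.sum_univ_succ] at this
    rw [mem_natSimplex]
    lia⟩
  invFun γ := ⟨Fin.cons ⟨n - ∑ i, γ.1 i, by lia⟩ fun i => ⟨γ.1 i,
      (single_le_sum (fun _ _ => Nat.zero_le _) (mem_univ i)).trans_lt (mem_natSimplex.1 γ.2)⟩, by
    have := mem_natSimplex.1 γ.2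
    simp only [Fin.sum_univ_succ, Fin.cons_zero, Fin.cons_succ]
    lia⟩
  left_inv α := by
    have := α.2
    rw [Fin.sum_univ_succ] at this
    refine Subtype.ext (funext fun i => Fin.cases (Fin.ext ?_) (fun i => rfl) i)
    simp only [Fin.cons_zero]
    lia
  right_inv γ := rfl

theorem comp_apply_zero {n k : ℕ} (α : Comp n (k + 1)) :
    (α.1 0 : ℕ) = n - ∑ i, (compEquivNatSimplex n k α).1 i := by
  have := α.2
  rw [Fin.sum_univ_succ] at this
  exact Nat.eq_sub_of_add_eq this

variable {F : Type*} [Field F]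

theorem bch_add_natCast_self (y : F) (m : ℕ) :
    bch (y + m) m = (ascPochhammer F m).eval (y + 1) / m ! := by
  rw [bch, ← descPochhammer_eval_eq_prod_range, descPochhammer_eval_eq_ascPochhammer,
    add_sub_cancel_right]

theorem prod_bch_eq_inv_mul_loweredEntry {n k : ℕ} (x l : Fin (k + 1) → F) (α β : Comp n (k + 1)) :
    ∏ i, bch (x i + l i * ((α.1 i : ℕ) : F) + ((β.1 i : ℕ) : F)) (β.1 i) =
      (∏ i, ((β.1 i : ℕ)! : F))⁻¹ *
        loweredEntry n (x 0 + 1) (l 0) (Fin.tail x + 1) (Fin.tail l) 0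
          (compEquivNatSimplex n k α) (compEquivNatSimplex n k β) := by
  simp_rw [bch_add_natCast_self, prod_div_distrib, div_eq_inv_mul, loweredEntry, risingProd,
    Nat.sub_zero, ← comp_apply_zero, Fin.prod_univ_succ, add_right_comm _ _ (1 : F)]
  rfl

theorem det_prod_bch {n k : ℕ} (x l : Fin (k + 1) → F) :
    (Matrix.of fun α β : Comp n (k + 1) =>
        ∏ i, bch (x i + l i * ((α.1 i : ℕ) : F) + ((β.1 i : ℕ) : F)) (β.1 i)).det =
      (loweredMatrix n (x 0 + 1) (l 0) (Fin.tail x + 1) (Fin.tail l) 0).det /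
        ∏ δ ∈ natSimplex (Fin k) (n + 1), ((n - ∑ i, δ i)! * ∏ i, ((δ i)! : F)) := by
  have factorials : ∏ β : Comp n (k + 1), (∏ i, ((β.1 i : ℕ)! : F)) =
      ∏ δ ∈ natSimplex (Fin k) (n + 1), ((n - ∑ i, δ i)! * ∏ i, ((δ i)! : F)) := by
    rw [← prod_coe_sort (natSimplex (Fin k) (n + 1)), ← (compEquivNatSimplex n k).prod_comp]
    refine prod_congr rfl fun β _ => ?_
    rw [Fin.prod_univ_succ, comp_apply_zero]
    rfl
  simp_rw [prod_bch_eq_inv_mul_loweredEntry]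
  rw [← factorials, div_eq_inv_mul, ← prod_inv_distrib,
    ← Matrix.det_submatrix_equiv_self (compEquivNatSimplex n k), ← Matrix.det_mul_row]
  rfl

theorem prod_linearFactor (n k : ℕ) (x l : Fin (k + 1) → F) :
    ∏ δ ∈ natSimplex (Fin k) (n + 1), ∏ e ∈ range (n - ∑ i, δ i),
        linearFactor n (x 0 + 1) (l 0) (Fin.tail x + 1) (Fin.tail l) e δ =
      ∏ ε : Fin (k + 1) → Fin (n + 1) with ∑ i, (ε i : ℕ) < n,
        ((n : F) + ∑ j, (x j + 1 + ((ε j : ℕ) : F)) / l j) := by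
  rw [prod_filter_fin_eq_prod_natSimplex (n := n)
      fun ε => (n : F) + ∑ j, (x j + 1 + (ε j : F)) / l j, prod_natSimplex_fin_succ]
  simp [linearFactor, Fin.tail, Fin.sum_univ_succ, add_assoc]

end Compositions

theorem stmt7 {F : Type*} [Field F] [CharZero F] (n k : ℕ) (hn : 0 < n) (hk : 0 < k)
    (x l : Fin k → F) (hl : ∀ j, l j ≠ 0) :
    Matrix.det (Matrix.of fun α β : Comp n k =>
        ∏ i, bch (x i + l i * ((α.1 i : ℕ) : F) + ((β.1 i : ℕ) : F)) ((β.1 i : ℕ))) =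
      (∏ j, l j) ^ ((n + k - 1).choose k) *
        (∏ ε ∈ Finset.univ.filter (fun f : Fin k → Fin (n + 1) => ∑ i, (f i : ℕ) < n),
          ((n : F) + ∑ j, (x j + 1 + ((ε j : ℕ) : F)) / l j)) /
        ∏ i ∈ Finset.Icc 1 n, (i : F) ^ ((n + k - i - 1).choose (k - 1)) := by
  obtain ⟨k, rfl⟩ := Nat.exists_eq_add_one.2 hk
  have exponent : ∑ δ ∈ natSimplex (Fin k) (n + 1), (n - ∑ i, δ i) =
      (n + (k + 1) - 1).choose (k + 1) := by
    obtain ⟨n, rfl⟩ := Nat.exists_eq_add_one.2 hn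
    rw [← card_natSimplex_fin_succ, card_natSimplex_fin, Nat.add_right_comm, Nat.add_sub_cancel]
  have denominator : ∏ δ ∈ natSimplex (Fin k) (n + 1), ((n - ∑ i, δ i)! : F) =
      ∏ i ∈ Icc 1 n, (i : F) ^ (n + (k + 1) - i - 1).choose (k + 1 - 1) := by
    simp only [Nat.sub_right_comm _ _ 1, ← add_assoc, Nat.add_sub_cancel]
    exact_mod_cast prod_natSimplex_factorial n k
  have factorials_ne_zero : ∏ δ ∈ natSimplex (Fin k) (n + 1), ∏ i, ((δ i)! : F) ≠ 0 :=
    prod_ne_zero_iff.2 fun δ _ => prod_ne_zero_iff.2 fun i _ => mod_cast (δ i).factorial_ne_zero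
  rw [det_prod_bch, det_loweredMatrix_zero (l := Fin.tail l) (hl 0) fun i => hl i.succ,
    show l 0 * ∏ i, Fin.tail l i = ∏ j, l j from (Fin.prod_univ_succ l).symm, exponent,
    prod_linearFactor, prod_mul_distrib, denominator, mul_right_comm,
    mul_div_mul_right _ _ factorials_ne_zero]
end

section
/- For vectors of indeterminates x = (x_1,...,x_k) and λ = (λ_1,...,λ_k), and positive integers n, k, the determinant of the matrix indexed by compositions α, β of n into k non-negative parts, with entry ∏_{i=1}^k (x_i+λ_i α_i)^{β_i}, equals (∏_{j=1}^k λ_j)^{binom(n+k-1,k)} · (n + Σ_{j=1}^k x_j/λ_j)^{binom(n+k-1,k)} · ∏_{i=1}^n i^{(k-1)·binom(n+k-i-1,k-1)}. -/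
open Finset

/-!
After a rescaling we may take all `λ i = 1`. For a composition `α` of `n`, the factor `x 0 + α 0`
equals `S` minus the sum of the other factors `x i + α i`, where `S = n + ∑ i, x i`. So column `β`
of the matrix consists of the values of the polynomial `(S - ∑ i, X i) ^ β 0 * ∏ i, X i ^ β i` (sum
and product over `i ≠ 0`), of degree at most `n`, at the points `x + α`. Its lowest term is
`S ^ β 0` times the monomial of exponent `β`, so the change of basis from monomials to these
polynomials has determinant `∏ β, S ^ β 0`. Passing from monomials to Newton polynomials is
unitriangular, and the values of the latter are products of falling factorials
`α i (α i - 1) ⋯ (α i - β i + 1)`, again a triangular matrix. Counting the compositions with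
`j ≤ α i` gives the exponents.

The rescaling divides by `λ`, so over a commutative ring the identity is obtained by specializing
the one over the fraction field of `ℤ[x, λ]`.
-/

open MvPolynomial

section CommRing

variable {R : Type*} [CommRing R] {n k m : ℕ}

theorem det_eq_prod_diag_of_injective {ι P : Type*} [Fintype ι] [DecidableEq ι] [PartialOrder P]
    {e : ι → P} (he : Function.Injective e) {M : Matrix ι ι R}
    (hM : ∀ i j, M i j ≠ 0 → e i ≤ e j) : M.det = ∏ i, M i i := by
  let _ : LinearOrder ι := LinearOrder.lift' (fun i => toLinearExtension (e i)) he
  have hupper : M.IsUpperTriangular := fun i j hji =>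
    by_contra fun h => not_le_of_gt hji (toLinearExtension.monotone (hM i j h))
  convert Matrix.det_of_isUpperTriangular hupper

namespace Comp

/-- The exponent vector of the monomial in `k` variables attached to a composition. -/
noncomputable def toFinsupp (γ : Comp n k) : Fin k →₀ ℕ :=
  Finsupp.equivFunOnFinite.symm fun i => γ.1 i

@[simp]
theorem toFinsupp_apply (γ : Comp n k) (i : Fin k) : γ.toFinsupp i = γ.1 i := rfl

theorem toFinsupp_injective : Function.Injective (toFinsupp : Comp n k → Fin k →₀ ℕ) :=
  fun _ _ h => Subtype.ext <| funext fun i => Fin.ext <| DFunLike.congr_fun h i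

theorem map_toFinsupp_univ :
    (univ : Finset (Comp n k)).map ⟨toFinsupp, toFinsupp_injective⟩ =
      (univ : Finset (Fin k)).finsuppAntidiag n := by
  ext d
  simp only [mem_map, mem_univ, true_and, Function.Embedding.coeFn_mk, mem_finsuppAntidiag,
    subset_univ, and_true]
  constructor
  · rintro ⟨γ, rfl⟩
    exact γ.2
  · intro hd
    have hlt (i : Fin k) : d i < n + 1 :=
      Nat.lt_succ_of_le (hd ▸ single_le_sum (fun _ _ => Nat.zero_le _) (mem_univ i))
    exact ⟨⟨fun i => ⟨d i, hlt i⟩, hd⟩, Finsupp.ext fun _ => rfl⟩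

/-- The exponent vector obtained by forgetting part `0`. It identifies the compositions of `n` into
`m + 1` parts with the monomials of degree at most `n` in `m` variables. -/
noncomputable def tail (γ : Comp n (m + 1)) : Fin m →₀ ℕ := γ.toFinsupp.tail

@[simp]
theorem tail_apply (γ : Comp n (m + 1)) (i : Fin m) : γ.tail i = γ.1 i.succ := rfl

theorem apply_zero_add_degree_tail (γ : Comp n (m + 1)) : (γ.1 0 : ℕ) + γ.tail.degree = n := by
  rw [Finsupp.degree_eq_sum]
  exact (Fin.sum_univ_succ _).symm.trans γ.2

theorem tail_injective : Function.Injective (tail : Comp n (m + 1) → Fin m →₀ ℕ) := by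
  intro γ δ h
  have hγ := γ.apply_zero_add_degree_tail
  have hδ := δ.apply_zero_add_degree_tail
  rw [h] at hγ
  refine toFinsupp_injective <| Finsupp.ext <| Fin.cases ?_ fun i => DFunLike.congr_fun h i
  simp only [toFinsupp_apply]
  omega

theorem exists_tail_eq {d : Fin m →₀ ℕ} (hd : d.degree ≤ n) :
    ∃ γ : Comp n (m + 1), γ.tail = d := by
  have hmem : d.cons (n - d.degree) ∈ (univ : Finset (Fin (m + 1))).finsuppAntidiag n := by
    rw [mem_finsuppAntidiag, Fin.sum_univ_succ]
    simp only [Finsupp.cons_zero, Finsupp.cons_succ, ← Finsupp.degree_eq_sum]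
    exact ⟨Nat.sub_add_cancel hd, subset_univ _⟩
  rw [← map_toFinsupp_univ, mem_map] at hmem
  obtain ⟨γ, -, hγ⟩ := hmem
  exact ⟨γ, (congrArg Finsupp.tail hγ).trans (Finsupp.tail_cons _ _)⟩

theorem card_filter_le_apply {j : ℕ} (hj : j ≤ n) (i : Fin (m + 1)) :
    #{γ : Comp n (m + 1) | j ≤ γ.1 i} = (n + m - j).choose m := by
  have hshift : {d ∈ (univ : Finset (Fin (m + 1))).finsuppAntidiag n | j ≤ d i} =
      (univ.finsuppAntidiag (n - j)).map (addRightEmbedding (Finsupp.single i j)) := by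
    ext d
    simp only [mem_filter, mem_map, mem_finsuppAntidiag, ← Finsupp.degree_eq_sum, subset_univ,
      and_true, addRightEmbedding_apply]
    constructor
    · rintro ⟨hd, hij⟩
      have hsub := tsub_add_cancel_of_le (Finsupp.single_le_iff.mpr hij)
      have hdeg := congrArg Finsupp.degree hsub
      rw [map_add, Finsupp.degree_single] at hdeg
      exact ⟨_, by omega, hsub⟩
    · rintro ⟨d, hd, rfl⟩
      simp only [map_add, hd, Finsupp.degree_single, Finsupp.add_apply, Finsupp.single_eq_same]
      omega
  calc #{γ : Comp n (m + 1) | j ≤ γ.1 i}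
      = #{d ∈ (univ : Finset (Fin (m + 1))).finsuppAntidiag n | j ≤ d i} := by
        rw [← map_toFinsupp_univ, filter_map, card_map]
        rfl
    _ = (m + 1 + (n - j) - 1).choose (n - j) := by
        rw [hshift, card_map, card_finsuppAntidiag_nat_eq_choose, card_fin]
    _ = (n + m - j).choose m := by
        rw [show m + 1 + (n - j) - 1 = m + (n - j) by omega, show n + m - j = m + (n - j) by omega,
          Nat.choose_symm_add]

@[to_additive]
theorem prod_prod_Icc_apply {A : Type*} [CommMonoid A] (i : Fin (m + 1)) (g : ℕ → A) :
    ∏ γ : Comp n (m + 1), ∏ j ∈ Icc 1 (γ.1 i : ℕ), g j =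
      ∏ j ∈ Icc 1 n, g j ^ (n + m - j).choose m := by
  rw [prod_comm' (t' := Icc 1 n) (s' := fun j => {γ : Comp n (m + 1) | j ≤ γ.1 i})]
  · exact prod_congr rfl fun j hj => by
      rw [prod_const, card_filter_le_apply (mem_Icc.mp hj).2]
  · intro γ j
    have := (γ.1 i).is_le
    simp only [mem_univ, true_and, mem_Icc, mem_filter]
    omega

theorem sum_apply (i : Fin (m + 1)) :
    ∑ γ : Comp n (m + 1), (γ.1 i : ℕ) = (n + m).choose (m + 1) := by
  calc ∑ γ : Comp n (m + 1), (γ.1 i : ℕ)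
      = ∑ j ∈ Icc 1 n, (n + m - j).choose m := by
        simpa only [sum_const, Nat.card_Icc, smul_eq_mul, mul_one, Nat.add_sub_cancel] using
          sum_sum_Icc_apply (A := ℕ) (n := n) i fun _ => 1
    _ = ∑ j ∈ range n, (j + m).choose m := by
        refine sum_bij' (fun j _ => n - j) (fun j _ => n - j) ?_ ?_ ?_ ?_ ?_ <;>
          simp only [mem_Icc, mem_range]
        any_goals omega
        intro j hj
        rw [Nat.sub_add_comm hj.2]
    _ = (n + m).choose (m + 1) := by
        cases n with
        | zero => simp
        | succ n => rw [Nat.sum_range_add_choose, Nat.add_right_comm]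

theorem prod_factorial_apply (i : Fin (m + 1)) :
    ∏ γ : Comp n (m + 1), ((γ.1 i : ℕ).factorial : R) =
      ∏ j ∈ Icc 1 n, (j : R) ^ (n + m - j).choose m := by
  rw [← prod_prod_Icc_apply i]
  simp only [← prod_Ico_id_eq_factorial, Ico_add_one_right_eq_Icc, Nat.cast_prod]

theorem eval_eq_sum_tail {p : MvPolynomial (Fin m) R} (hp : p.totalDegree ≤ n) (v : Fin m → R) :
    eval v p = ∑ γ : Comp n (m + 1), (∏ i, v i ^ γ.tail i) * coeff γ.tail p := by
  have hsupp : p.support ⊆ univ.map ⟨tail, tail_injective (n := n)⟩ := fun d hd => by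
    obtain ⟨γ, hγ⟩ := exists_tail_eq ((le_totalDegree hd).trans hp)
    exact mem_map.mpr ⟨γ, mem_univ γ, hγ⟩
  rw [eval_eq', sum_subset hsupp fun d _ hd => by rw [notMem_support_iff.mp hd, zero_mul], sum_map]
  simp only [Function.Embedding.coeFn_mk, mul_comm]

theorem totalDegree_pow_mul_monomial_le {p : MvPolynomial (Fin m) R} (hp : p.totalDegree ≤ 1)
    (β : Comp n (m + 1)) : (p ^ (β.1 0 : ℕ) * monomial β.tail 1).totalDegree ≤ n := by
  calc (p ^ (β.1 0 : ℕ) * monomial β.tail 1).totalDegree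
      ≤ (p ^ (β.1 0 : ℕ)).totalDegree + (monomial β.tail (1 : R)).totalDegree :=
        totalDegree_mul _ _
    _ ≤ (β.1 0 : ℕ) * 1 + β.tail.degree :=
        add_le_add ((totalDegree_pow _ _).trans (Nat.mul_le_mul_left _ hp))
          (totalDegree_monomial_le _ _)
    _ = n := by rw [mul_one, β.apply_zero_add_degree_tail]

theorem det_eval_eq_det_mul_det_coeff {P : Comp n (m + 1) → MvPolynomial (Fin m) R}
    (hP : ∀ β, (P β).totalDegree ≤ n) (v : Comp n (m + 1) → Fin m → R) :
    (Matrix.of fun α β => eval (v α) (P β)).det =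
      (Matrix.of fun α γ : Comp n (m + 1) => ∏ i, v α i ^ γ.tail i).det *
        (Matrix.of fun γ β : Comp n (m + 1) => coeff γ.tail (P β)).det := by
  rw [← Matrix.det_mul]
  congr 1
  ext α β
  exact eval_eq_sum_tail (hP β) (v α)

theorem det_coeff_of_monic (ord : MonomialOrder (Fin m))
    {P : Comp n (m + 1) → MvPolynomial (Fin m) R} (hmonic : ∀ β, ord.Monic (P β))
    (hdeg : ∀ β, ord.degree (P β) = β.tail) :
    (Matrix.of fun γ β : Comp n (m + 1) => coeff γ.tail (P β)).det = 1 := by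
  rw [det_eq_prod_diag_of_injective (ord.toSyn.injective.comp tail_injective)]
  · exact prod_eq_one fun β _ => by
      rw [Matrix.of_apply, ← hdeg, (hmonic β).coeff_degree]
  · intro γ β h
    rw [Function.comp_apply, Function.comp_apply, ← hdeg β]
    exact ord.le_degree (mem_support_iff.mpr h)

theorem det_coeff_pow_mul_monomial (p : MvPolynomial (Fin m) R) :
    (Matrix.of fun γ β : Comp n (m + 1) =>
        coeff γ.tail (p ^ (β.1 0 : ℕ) * monomial β.tail 1)).det =
      constantCoeff p ^ (n + m).choose (m + 1) := by
  simp only [coeff_mul_monomial', mul_one]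
  rw [det_eq_prod_diag_of_injective (OrderDual.toDual.injective.comp tail_injective)]
  · simp only [Matrix.of_apply, le_refl, if_true, tsub_self, ← constantCoeff_eq, map_pow,
      prod_pow_eq_pow_sum, sum_apply]
  · intro γ β h
    exact (ite_ne_right_iff.mp h).1

end Comp

theorem monomialOrder_degree_prod_of_monic {σ ι : Type*} {ord : MonomialOrder σ}
    {P : ι → MvPolynomial σ R} {s : Finset ι} (hP : ∀ i ∈ s, ord.Monic (P i)) :
    ord.degree (∏ i ∈ s, P i) = ∑ i ∈ s, ord.degree (P i) :=
  ord.degree_prod_of_regular fun i hi => (hP i hi).leadingCoeff_eq_one ▸ isRegular_one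

theorem totalDegree_X_le_one {σ : Type*} (i : σ) : (X i : MvPolynomial σ R).totalDegree ≤ 1 :=
  (totalDegree_monomial_le _ _).trans_eq (Finsupp.degree_single i 1)

section Newton

variable {σ : Type*} [Fintype σ] (a : σ → ℕ → R) (d : σ →₀ ℕ)

/-- The multivariate Newton polynomial with exponent vector `d`: in each variable `i` it is the
monic polynomial with roots `a i 0, …, a i (d i - 1)`. -/
noncomputable def newtonPoly : MvPolynomial σ R :=
  ∏ i, ∏ c ∈ range (d i), (X i - C (a i c))

theorem monic_newtonPoly (ord : MonomialOrder σ) : ord.Monic (newtonPoly a d) :=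
  .prod fun i _ => .prod fun c _ => ord.monic_X_sub_C i (a i c)

theorem degree_newtonPoly [Nontrivial R] (ord : MonomialOrder σ) :
    ord.degree (newtonPoly a d) = d := by
  have hmonic (i : σ) (c : ℕ) : ord.Monic (X i - C (a i c)) := ord.monic_X_sub_C i (a i c)
  rw [newtonPoly, monomialOrder_degree_prod_of_monic fun i _ => .prod fun c _ => hmonic i c]
  simp only [monomialOrder_degree_prod_of_monic fun c _ => hmonic _ c, ord.degree_X_sub_C,
    sum_const, card_range, Finsupp.smul_single_one, Finsupp.univ_sum_single]

theorem totalDegree_newtonPoly_le : (newtonPoly a d).totalDegree ≤ d.degree := by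
  rw [Finsupp.degree_eq_sum]
  refine (totalDegree_finsetProd _ _).trans (sum_le_sum fun i _ => ?_)
  refine (totalDegree_finsetProd _ _).trans ?_
  refine (sum_le_card_nsmul _ _ 1 fun c _ => ?_).trans_eq (by simp)
  exact (totalDegree_sub_C_le _ _).trans (totalDegree_X_le_one i)

theorem eval_newtonPoly_add_natCast (y : σ → R) (s : σ → ℕ) :
    eval (fun i => y i + s i) (newtonPoly (fun i c => y i + c) d) =
      ∏ i, ((s i).descFactorial (d i) : R) := by
  simp only [newtonPoly, map_prod, map_sub, eval_X, eval_C, add_sub_add_left_eq_sub,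
    ← descPochhammer_eval_eq_descFactorial, descPochhammer_eval_eq_prod_range]

end Newton

theorem det_prod_descFactorial_tail :
    (Matrix.of fun α β : Comp n (m + 1) =>
        ∏ i, ((α.tail i).descFactorial (β.tail i) : R)).det =
      ∏ j ∈ Icc 1 n, (j : R) ^ (m * (n + m - j).choose m) := by
  rw [det_eq_prod_diag_of_injective (OrderDual.toDual.injective.comp Comp.tail_injective)]
  · simp only [Matrix.of_apply, Nat.descFactorial_self, Comp.tail_apply]
    rw [prod_comm]
    simp only [Comp.prod_factorial_apply, prod_const, card_fin, ← prod_pow, ← pow_mul, mul_comm]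
  · intro α β h i
    by_contra! hlt : α.tail i < β.tail i
    refine h (prod_eq_zero (mem_univ i) ?_)
    rw [Nat.descFactorial_of_lt hlt, Nat.cast_zero]

theorem det_prod_add_tail_pow_tail (y : Fin m → R) :
    (Matrix.of fun α γ : Comp n (m + 1) => ∏ i, (y i + (α.tail i : R)) ^ γ.tail i).det =
      ∏ j ∈ Icc 1 n, (j : R) ^ (m * (n + m - j).choose m) := by
  nontriviality R
  let newton (β : Comp n (m + 1)) := newtonPoly (fun i c => y i + (c : R)) β.tail
  have hdeg (β : Comp n (m + 1)) : (newton β).totalDegree ≤ n :=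
    (totalDegree_newtonPoly_le _ _).trans
      (le_of_add_le_right β.apply_zero_add_degree_tail.le)
  have hdet := Comp.det_eval_eq_det_mul_det_coeff hdeg fun α i => y i + (α.tail i : R)
  rw [Comp.det_coeff_of_monic .lex (fun β => monic_newtonPoly _ _ _)
    (fun β => degree_newtonPoly _ _ _), mul_one] at hdet
  simp only [newton, eval_newtonPoly_add_natCast] at hdet
  rw [← hdet, det_prod_descFactorial_tail]

/-- The composition matrix of the parameters `x` and `λ` (here `l`), whose entries are products of
powers of the linear forms `x i + l i * α i`; rows are evaluation points, columns exponents. -/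
def shiftedPowerMatrix (n : ℕ) (x l : Fin k → R) : Matrix (Comp n k) (Comp n k) R :=
  .of fun α β => ∏ i, (x i + l i * ((α.1 i : ℕ) : R)) ^ (β.1 i : ℕ)

theorem shiftedPowerMatrix_one_apply (y : Fin (m + 1) → R) (α β : Comp n (m + 1)) :
    shiftedPowerMatrix n y 1 α β =
      eval (fun i => y i.succ + (α.tail i : R))
        ((C (n + ∑ i, y i) - ∑ i, X i) ^ (β.1 0 : ℕ) * monomial β.tail 1) := by
  have hzero : y 0 + (α.1 0 : ℕ) =
      n + ∑ i, y i - ∑ i : Fin m, (y i.succ + (α.tail i : R)) := by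
    have hn := congrArg (Nat.cast : ℕ → R) α.apply_zero_add_degree_tail
    rw [Finsupp.degree_eq_sum] at hn
    push_cast at hn
    rw [← hn, Fin.sum_univ_succ, sum_add_distrib]
    ring
  simp [shiftedPowerMatrix, Fin.prod_univ_succ, hzero, eval_monomial, Finsupp.prod_fintype]

theorem det_shiftedPowerMatrix_one (y : Fin (m + 1) → R) :
    (shiftedPowerMatrix n y 1).det =
      (n + ∑ i, y i) ^ (n + m).choose (m + 1) *
        ∏ j ∈ Icc 1 n, (j : R) ^ (m * (n + m - j).choose m) := by
  let p : MvPolynomial (Fin m) R := C (n + ∑ i, y i) - ∑ i, X i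
  have hp : p.totalDegree ≤ 1 := (totalDegree_sub _ _).trans <|
    max_le ((totalDegree_C _).trans_le zero_le_one) <|
      totalDegree_finsetSum_le fun i _ => totalDegree_X_le_one i
  have hconst : constantCoeff p = n + ∑ i, y i := by simp [p]
  have hM : shiftedPowerMatrix n y 1 = Matrix.of fun α β =>
      eval (fun i => y i.succ + (α.tail i : R)) (p ^ (β.1 0 : ℕ) * monomial β.tail 1) :=
    Matrix.ext (shiftedPowerMatrix_one_apply y)
  rw [hM, Comp.det_eval_eq_det_mul_det_coeff (Comp.totalDegree_pow_mul_monomial_le hp),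
    det_prod_add_tail_pow_tail, Comp.det_coeff_pow_mul_monomial, hconst, mul_comm]

theorem det_shiftedPowerMatrix_mul (y l : Fin (m + 1) → R) :
    (shiftedPowerMatrix n (l * y) l).det =
      (∏ j, l j) ^ (n + m).choose (m + 1) * (shiftedPowerMatrix n y 1).det := by
  have hM : shiftedPowerMatrix n (l * y) l =
      .of fun α β => (∏ i, l i ^ (β.1 i : ℕ)) * shiftedPowerMatrix n y 1 α β := by
    ext α β
    simp only [shiftedPowerMatrix, Matrix.of_apply, Pi.mul_apply, Pi.one_apply, one_mul, ← mul_add,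
      mul_pow, prod_mul_distrib]
  rw [hM, Matrix.det_mul_row, prod_comm]
  simp only [prod_pow_eq_pow_sum, Comp.sum_apply, prod_pow]

theorem map_det_shiftedPowerMatrix {S : Type*} [CommRing S] (f : R →+* S) (x l : Fin k → R) :
    f (shiftedPowerMatrix n x l).det = (shiftedPowerMatrix n (f ∘ x) (f ∘ l)).det := by
  rw [f.map_det]
  congr 1
  ext α β
  simp [shiftedPowerMatrix]

theorem prod_mul_add_sum_div {F ι : Type*} [Field F] [Fintype ι] [DecidableEq ι] (c : F)
    (x : ι → F) {l : ι → F} (hl : ∀ j, l j ≠ 0) :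
    (∏ j, l j) * (c + ∑ j, x j / l j) = c * ∏ j, l j + ∑ j, x j * ∏ i ∈ univ.erase j, l i := by
  rw [mul_add, mul_comm c, mul_sum]
  congr 1
  refine sum_congr rfl fun j _ => ?_
  rw [← mul_prod_erase univ l (mem_univ j)]
  field_simp [hl j]

theorem det_shiftedPowerMatrix_of_ne_zero {F : Type*} [Field F] (x : Fin (m + 1) → F)
    {l : Fin (m + 1) → F} (hl : ∀ j, l j ≠ 0) :
    (shiftedPowerMatrix n x l).det =
      (n * ∏ j, l j + ∑ j, x j * ∏ i ∈ univ.erase j, l i) ^ (n + m).choose (m + 1) *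
        ∏ j ∈ Icc 1 n, (j : F) ^ (m * (n + m - j).choose m) := by
  have hx : x = l * fun j => x j / l j := funext fun j => (mul_div_cancel₀ _ (hl j)).symm
  rw [← prod_mul_add_sum_div _ x hl, mul_pow, mul_assoc, ← det_shiftedPowerMatrix_one,
    ← det_shiftedPowerMatrix_mul, ← hx]

theorem det_shiftedPowerMatrix (x l : Fin (m + 1) → R) :
    (shiftedPowerMatrix n x l).det =
      (n * ∏ j, l j + ∑ j, x j * ∏ i ∈ univ.erase j, l i) ^ (n + m).choose (m + 1) *
        ∏ j ∈ Icc 1 n, (j : R) ^ (m * (n + m - j).choose m) := by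
  let A := MvPolynomial (Fin (m + 1) ⊕ Fin (m + 1)) ℤ
  let K := FractionRing A
  let x' : Fin (m + 1) → A := fun i => X (.inl i)
  let l' : Fin (m + 1) → A := fun i => X (.inr i)
  have hgeneric : (shiftedPowerMatrix n x' l').det =
      (n * ∏ j, l' j + ∑ j, x' j * ∏ i ∈ univ.erase j, l' i) ^ (n + m).choose (m + 1) *
        ∏ j ∈ Icc 1 n, (j : A) ^ (m * (n + m - j).choose m) := by
    apply IsFractionRing.injective A K
    rw [map_det_shiftedPowerMatrix, det_shiftedPowerMatrix_of_ne_zero]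
    · simp
    · intro j
      exact (map_ne_zero_iff _ (IsFractionRing.injective A K)).mpr (X_ne_zero _)
  obtain ⟨f, hx, hl⟩ : ∃ f : A →+* R, (∀ i, f (x' i) = x i) ∧ ∀ i, f (l' i) = l i :=
    ⟨eval₂Hom (Int.castRingHom R) (Sum.elim x l), fun i => eval₂Hom_X' _ _ _,
      fun i => eval₂Hom_X' _ _ _⟩
  have hspec := congrArg f hgeneric
  rw [map_det_shiftedPowerMatrix, show f ∘ x' = x from funext hx, show f ∘ l' = l from funext hl]
    at hspec
  simpa only [map_mul, map_pow, map_add, map_sum, map_prod, map_natCast, hx, hl] using hspec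

theorem stmt10_general (n k : ℕ) (hk : 0 < k) (x l : Fin k → R) :
    Matrix.det (Matrix.of fun α β : Comp n k =>
        ∏ i, (x i + l i * ((α.1 i : ℕ) : R)) ^ ((β.1 i : ℕ))) =
      (n * ∏ j, l j + ∑ j, x j * ∏ i ∈ univ.erase j, l i) ^ ((n + k - 1).choose k) *
        ∏ i ∈ Icc 1 n, (i : R) ^ ((k - 1) * (n + k - i - 1).choose (k - 1)) := by
  obtain ⟨m, rfl⟩ := Nat.exists_eq_add_one.mpr hk
  have hsub (i : ℕ) : n + (m + 1) - i - 1 = n + m - i := by omega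
  simp only [hsub, Nat.add_sub_cancel, Nat.add_succ_sub_one]
  exact det_shiftedPowerMatrix x l

end CommRing

theorem stmt10 {F : Type*} [Field F] [CharZero F] (n k : ℕ) (hn : 0 < n) (hk : 0 < k)
    (x l : Fin k → F) (hl : ∀ j, l j ≠ 0) :
    Matrix.det (Matrix.of fun α β : Comp n k =>
        ∏ i, (x i + l i * ((α.1 i : ℕ) : F)) ^ ((β.1 i : ℕ))) =
      (∏ j, l j) ^ ((n + k - 1).choose k) *
        ((n : F) + ∑ j, x j / l j) ^ ((n + k - 1).choose k) *
        ∏ i ∈ Finset.Icc 1 n, (i : F) ^ ((k - 1) * (n + k - i - 1).choose (k - 1)) := by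
  rw [stmt10_general n k hk x l, ← prod_mul_add_sum_div _ x hl, mul_pow]
end

section
/- For a vector of indeterminates x = (x_1,...,x_k), an indeterminate λ, and positive integers n, k, the determinant of the matrix indexed by compositions α, β of n into k non-negative parts, with entry ∏_{i=1}^k (x_i+λα_i)^{β_i}, equals λ^{(k-1)·binom(n+k-1,k)} · (|x|+λn)^{binom(n+k-1,k)} · ∏_{i=1}^n i^{(k-1)·binom(n+k-i-1,k-1)}, where |x| = x_1+···+x_k. -/
open Finset

/-!
Replacing the monomials `X ^ β` by monic polynomials with leading exponents `β` changes the matrix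
of values by a unitriangular factor, so it preserves the determinant. This is done twice. First
`X 0` is replaced by the sum of all coordinates, which is `|x| + l * n` in every row; this power
leaves the matrix column by column, and what remains is a generalized Vandermonde matrix on the
simplex of exponents of degree at most `n` in the remaining variables. There the monomials are
replaced by the Newton polynomials of the grid of nodes `x i + l * j`; as the Newton polynomial of
multidegree `c` vanishes at the grid point `d` unless `c ≤ d`, the matrix becomes triangular. Its
diagonal entries are products of factors `l * t`, and `t` occurs in coordinate `i` once for each
composition with `t ≤ γ i`.
-/

section Evaluation

open MvPolynomial

variable {ι σ R : Type*} [CommRing R]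

theorem degree_prod_of_monic {κ : Type*} {m : MonomialOrder σ} {s : Finset κ}
    {Q : κ → MvPolynomial σ R} (hQ : ∀ i ∈ s, m.Monic (Q i)) :
    m.degree (∏ i ∈ s, Q i) = ∑ i ∈ s, m.degree (Q i) :=
  m.degree_prod_of_regular fun i hi ↦ (hQ i hi).leadingCoeff_eq_one ▸ isRegular_one

variable [Fintype ι] [Fintype σ] {e : ι → σ →₀ ℕ} {P : ι → MvPolynomial σ R}

theorem eval_eq_sum_of_support_subset_range (he : e.Injective) {p : MvPolynomial σ R}
    (hp : (p.support : Set (σ →₀ ℕ)) ⊆ Set.range e) (y : σ → R) :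
    eval y p = ∑ c, coeff (e c) p * ∏ i, y i ^ e c i := by
  rw [eval_eq']
  refine Eq.trans ?_ (Finset.sum_map univ ⟨e, he⟩ fun d ↦ coeff d p * ∏ i, y i ^ d i)
  refine Finset.sum_subset (fun d hd ↦ ?_) fun d _ hd ↦ ?_
  · simpa using hp hd
  · rw [notMem_support_iff.1 hd, zero_mul]

variable [DecidableEq ι]

theorem det_eq_prod_diag_of_blockTriangular {α : Type*} [LinearOrder α] {M : Matrix ι ι R}
    {r : ι → α} (hr : r.Injective) (hM : M.BlockTriangular r) : M.det = ∏ i, M i i := by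
  let _ : LinearOrder ι := .lift' r hr
  convert! Matrix.det_of_isUpperTriangular (M := M) fun _ _ hij ↦ hM hij

theorem det_eval_eq_det_monomial_mul_det_coeff (he : e.Injective)
    (hP : ∀ b, ((P b).support : Set (σ →₀ ℕ)) ⊆ Set.range e) (y : ι → σ → R) :
    (Matrix.of fun a b ↦ eval (y a) (P b)).det =
      (Matrix.of fun a c ↦ ∏ i, y a i ^ e c i).det *
        (Matrix.of fun c b ↦ coeff (e c) (P b)).det := by
  rw [← Matrix.det_mul]
  congr 1
  ext a b
  simp only [Matrix.of_apply, Matrix.mul_apply, mul_comm (∏ i, y a i ^ _)]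
  exact eval_eq_sum_of_support_subset_range he (hP b) (y a)

theorem det_eval_eq_det_monomial_of_monic (m : MonomialOrder σ) (he : e.Injective)
    (hmonic : ∀ b, m.Monic (P b)) (hdegree : ∀ b, m.degree (P b) = e b)
    (hP : ∀ b, ((P b).support : Set (σ →₀ ℕ)) ⊆ Set.range e) (y : ι → σ → R) :
    (Matrix.of fun a b ↦ eval (y a) (P b)).det = (Matrix.of fun a b ↦ ∏ i, y a i ^ e b i).det := by
  have htriangular : (Matrix.of fun c b ↦ coeff (e c) (P b)).BlockTriangular (m.toSyn ∘ e) :=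
    fun c b hbc ↦ m.coeff_eq_zero_of_lt (by rwa [hdegree])
  rw [det_eval_eq_det_monomial_mul_det_coeff he hP,
    det_eq_prod_diag_of_blockTriangular (m.toSyn.injective.comp he) htriangular,
    Finset.prod_eq_one, mul_one]
  intro b _
  rw [Matrix.of_apply, ← hdegree b, (hmonic b).coeff_degree]

theorem monic_prod_prod_range {m : MonomialOrder σ} {L : σ → ℕ → MvPolynomial σ R}
    (hL : ∀ i j, m.Monic (L i j)) (c : σ →₀ ℕ) :
    m.Monic (∏ i, ∏ j ∈ range (c i), L i j) :=
  .prod fun i _ ↦ .prod fun j _ ↦ hL i j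

theorem degree_prod_prod_range {m : MonomialOrder σ} {L : σ → ℕ → MvPolynomial σ R}
    (hL : ∀ i j, m.Monic (L i j)) (hdegree : ∀ i j, m.degree (L i j) = Finsupp.single i 1)
    (c : σ →₀ ℕ) : m.degree (∏ i, ∏ j ∈ range (c i), L i j) = c := by
  rw [degree_prod_of_monic fun i _ ↦ .prod fun j _ ↦ hL i j]
  simp_rw [degree_prod_of_monic fun j _ ↦ hL _ j, hdegree]
  simp

end Evaluation

section Newton

open MvPolynomial

variable {σ R : Type*} [Fintype σ] [CommRing R]

/-- The Newton interpolation polynomial of multidegree `c` on the grid whose `i`-th coordinate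
runs through the nodes `a i 0, a i 1, …`. -/
noncomputable def newtonPolynomial (a : σ → ℕ → R) (c : σ →₀ ℕ) : MvPolynomial σ R :=
  ∏ i, ∏ j ∈ range (c i), (X i - C (a i j))

theorem monic_newtonPolynomial (m : MonomialOrder σ) (a : σ → ℕ → R) (c : σ →₀ ℕ) :
    m.Monic (newtonPolynomial a c) :=
  monic_prod_prod_range (fun i j ↦ m.monic_X_sub_C i (a i j)) c

theorem degree_newtonPolynomial [Nontrivial R] (m : MonomialOrder σ) (a : σ → ℕ → R)
    (c : σ →₀ ℕ) : m.degree (newtonPolynomial a c) = c :=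
  degree_prod_prod_range (fun i j ↦ m.monic_X_sub_C i (a i j))
    (fun i j ↦ m.degree_X_sub_C i (a i j)) c

theorem le_of_mem_support_newtonPolynomial {a : σ → ℕ → R} {c d : σ →₀ ℕ}
    (hd : d ∈ (newtonPolynomial a c).support) : d ≤ c := by
  classical
  intro i
  have degreeOf_X_sub_C (k : σ) (r : R) :
      (X k - C r).degreeOf i ≤ if k = i then 1 else 0 := by
    rw [sub_eq_add_neg, ← map_neg]
    refine (degreeOf_add_le i _ _).trans ?_
    cases subsingleton_or_nontrivial R
    · simp [Subsingleton.elim (_ : MvPolynomial σ R) 0]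
    · simp [degreeOf_X, degreeOf_C, eq_comm]
  refine degreeOf_le_iff.1 ?_ d hd
  calc (newtonPolynomial a c).degreeOf i
      ≤ ∑ k, ∑ j ∈ range (c k), (X k - C (a k j)).degreeOf i :=
        (degreeOf_prod_le i _ _).trans (Finset.sum_le_sum fun k _ ↦ degreeOf_prod_le i _ _)
    _ ≤ ∑ k, ∑ j ∈ range (c k), if k = i then 1 else 0 := by
        gcongr with k _ j _
        exact degreeOf_X_sub_C k (a k j)
    _ = c i := by simp

theorem eval_newtonPolynomial (a : σ → ℕ → R) (c : σ →₀ ℕ) (y : σ → R) :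
    eval y (newtonPolynomial a c) = ∏ i, ∏ j ∈ range (c i), (y i - a i j) := by
  simp [newtonPolynomial, map_prod]

theorem eval_newtonPolynomial_grid_eq_zero (a : σ → ℕ → R) {c d : σ →₀ ℕ} (hcd : ¬ c ≤ d) :
    eval (fun i ↦ a i (d i)) (newtonPolynomial a c) = 0 := by
  obtain ⟨i, hi⟩ : ∃ i, d i < c i := by simpa [Finsupp.le_def] using hcd
  rw [eval_newtonPolynomial]
  exact prod_eq_zero (mem_univ i) (prod_eq_zero (mem_range.2 hi) (sub_self _))

theorem det_vandermonde_of_isLowerSet {ι : Type*} [Fintype ι] [DecidableEq ι]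
    {e : ι → σ →₀ ℕ} (he : e.Injective) (hlower : IsLowerSet (Set.range e)) (a : σ → ℕ → R) :
    (Matrix.of fun α β ↦ ∏ i, a i (e α i) ^ e β i).det =
      ∏ β, ∏ i, ∏ j ∈ range (e β i), (a i (e β i) - a i j) := by
  nontriviality R
  let _ : LinearOrder σ := .lift' (Fintype.equivFin σ) (Fintype.equivFin σ).injective
  let m : MonomialOrder σ := .degLex
  let N : Matrix ι ι R := .of fun α β ↦ eval (fun i ↦ a i (e α i)) (newtonPolynomial a (e β))
  have htriangular : N.transpose.BlockTriangular (m.toSyn ∘ e) := fun β α hlt ↦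
    eval_newtonPolynomial_grid_eq_zero a fun hle ↦ (m.toSyn_monotone hle).not_gt hlt
  rw [← det_eval_eq_det_monomial_of_monic m he (fun β ↦ monic_newtonPolynomial m a (e β))
      (fun β ↦ degree_newtonPolynomial m a (e β))
      (fun β _ hd ↦ hlower (le_of_mem_support_newtonPolynomial hd) ⟨β, rfl⟩),
    ← Matrix.det_transpose,
    det_eq_prod_diag_of_blockTriangular (m.toSyn.injective.comp he) htriangular]
  exact prod_congr rfl fun β _ ↦ eval_newtonPolynomial a (e β) _

end Newton

section Pivot

open MvPolynomial
open scoped MonomialOrder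

variable {m : ℕ} {R : Type*} [CommRing R]

/-- The linear forms of the unitriangular change of coordinates that replaces the first coordinate
by the sum of all coordinates, so that a matrix whose rows have constant sum gets a constant factor
out of the first coordinate. -/
noncomputable def sumFirst (m : ℕ) (R : Type*) [CommRing R] :
    Fin (m + 1) → MvPolynomial (Fin (m + 1)) R :=
  Fin.cons (∑ i, X i) fun i ↦ X i.succ

theorem degree_sum_X_succ_lt [Nontrivial R] :
    MonomialOrder.degLex.degree (∑ i : Fin m, X i.succ : MvPolynomial (Fin (m + 1)) R)
      ≺[MonomialOrder.degLex] MonomialOrder.degLex.degree (X 0 : MvPolynomial (Fin (m + 1)) R) := by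
  rw [MonomialOrder.degree_X]
  refine MonomialOrder.degree_sum_le.trans_lt ?_
  rw [Finset.sup_lt_iff]
  · intro i _
    rw [MonomialOrder.degree_X]
    exact MonomialOrder.degLex_single_lt_iff.2 i.succ_pos
  · rw [bot_lt_iff_ne_bot, MonomialOrder.bot_eq_zero]
    simp

theorem monic_sumFirst (i : Fin (m + 1)) : MonomialOrder.degLex.Monic (sumFirst m R i) := by
  nontriviality R
  refine Fin.cases ?_ (fun i ↦ MonomialOrder.monic_X) i
  rw [sumFirst, Fin.cons_zero, Fin.sum_univ_succ]
  exact MonomialOrder.monic_X.add_of_lt degree_sum_X_succ_lt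

theorem degree_sumFirst [Nontrivial R] (i : Fin (m + 1)) :
    MonomialOrder.degLex.degree (sumFirst m R i) = Finsupp.single i 1 := by
  refine Fin.cases ?_ (fun i ↦ MonomialOrder.degree_X) i
  rw [sumFirst, Fin.cons_zero, Fin.sum_univ_succ,
    MonomialOrder.degree_add_of_lt degree_sum_X_succ_lt, MonomialOrder.degree_X]

theorem isHomogeneous_sumFirst (i : Fin (m + 1)) : (sumFirst m R i).IsHomogeneous 1 :=
  Fin.cases (IsHomogeneous.sum univ X 1 fun j _ ↦ isHomogeneous_X R j)
    (fun j ↦ isHomogeneous_X R j.succ) i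

theorem eval_sumFirst (y : Fin (m + 1) → R) (i : Fin (m + 1)) :
    eval y (sumFirst m R i) = (Fin.cons (∑ j, y j) (Fin.tail y) : Fin (m + 1) → R) i := by
  refine Fin.cases ?_ (fun i ↦ ?_) i <;> simp [sumFirst, Fin.tail]

theorem det_monomial_eq_det_monomial_sum_first {ι : Type*} [Fintype ι] [DecidableEq ι] {n : ℕ}
    {e : ι → Fin (m + 1) →₀ ℕ} (he : e.Injective) (hrange : Set.range e = {c | c.degree = n})
    (y : ι → Fin (m + 1) → R) :
    (Matrix.of fun α β ↦ ∏ i, y α i ^ e β i).det =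
      (Matrix.of fun α β ↦ (∑ i, y α i) ^ e β 0 * ∏ i : Fin m, y α i.succ ^ e β i.succ).det := by
  nontriviality R
  let P (β : ι) : MvPolynomial (Fin (m + 1)) R := ∏ i, ∏ _j ∈ range (e β i), sumFirst m R i
  have hP (β : ι) : ((P β).support : Set (Fin (m + 1) →₀ ℕ)) ⊆ Set.range e := by
    have hdeg : ∑ i, e β i = n := by
      rw [← Finsupp.degree_eq_sum]
      exact hrange.subset ⟨β, rfl⟩
    have hhom : (P β).IsHomogeneous n := by
      rw [← hdeg]
      refine .prod _ _ _ fun i _ ↦ ?_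
      simpa using (isHomogeneous_sumFirst i).pow (e β i)
    rw [hrange]
    intro c hc
    by_contra hne
    exact mem_support_iff.1 hc (hhom.coeff_eq_zero hne)
  rw [← det_eval_eq_det_monomial_of_monic .degLex he
    (fun β ↦ monic_prod_prod_range (fun i _ ↦ monic_sumFirst i) (e β))
    (fun β ↦ degree_prod_prod_range (fun i _ ↦ monic_sumFirst i)
      (fun i _ ↦ degree_sumFirst i) (e β)) hP]
  congr 1
  ext α β
  simp [eval_sumFirst, Fin.prod_univ_succ, Fin.tail, map_prod]

end Pivot

@[to_additive]
theorem prod_Icc_sub_eq_prod_range {M : Type*} [CommMonoid M] (f : ℕ → M) (n : ℕ) :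
    ∏ t ∈ Icc 1 n, f (n - t) = ∏ j ∈ range n, f j :=
  prod_nbij' (n - ·) (n - ·) (by grind) (by grind) (by grind) (by grind) (by grind)

namespace Comp

variable {n k m : ℕ}

/-- A composition as the exponent vector of a monomial in `k` variables. -/
noncomputable def exponent (γ : Comp n k) : Fin k →₀ ℕ :=
  Finsupp.equivFunOnFinite.symm fun i ↦ (γ.1 i : ℕ)

@[simp]
theorem exponent_apply (γ : Comp n k) (i : Fin k) : exponent γ i = γ.1 i := rfl

theorem exponent_injective : (exponent : Comp n k → Fin k →₀ ℕ).Injective := fun _ _ h ↦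
  Subtype.ext <| funext fun i ↦ Fin.ext <| DFunLike.congr_fun h i

theorem degree_exponent (γ : Comp n k) : (exponent γ).degree = n := by
  rw [Finsupp.degree_eq_sum]
  exact γ.2

theorem range_exponent : Set.range (exponent : Comp n k → Fin k →₀ ℕ) = {c | c.degree = n} := by
  refine Set.Subset.antisymm (Set.range_subset_iff.2 degree_exponent) ?_
  rintro c rfl
  have hc (i : Fin k) : c i < c.degree + 1 := Nat.lt_succ_of_le (Finsupp.le_degree i c)
  exact ⟨⟨fun i ↦ ⟨c i, hc i⟩, (Finsupp.degree_eq_sum c).symm⟩, by ext i; rfl⟩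

/-- The exponent vector of a composition without its first part, which the other parts determine. -/
noncomputable def tailExponent (γ : Comp n (m + 1)) : Fin m →₀ ℕ := (exponent γ).tail

@[simp]
theorem tailExponent_apply (γ : Comp n (m + 1)) (i : Fin m) : tailExponent γ i = γ.1 i.succ := rfl

theorem head_add_degree_tailExponent (γ : Comp n (m + 1)) :
    (γ.1 0 : ℕ) + (tailExponent γ).degree = n := by
  rw [Finsupp.degree_eq_sum]
  exact (Fin.sum_univ_succ _).symm.trans γ.2

theorem tailExponent_injective : (tailExponent : Comp n (m + 1) → Fin m →₀ ℕ).Injective := by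
  intro γ δ h
  have hhead : exponent γ 0 = exponent δ 0 := by
    have hγ := head_add_degree_tailExponent γ
    have hδ := head_add_degree_tailExponent δ
    rw [h] at hγ
    exact Nat.add_right_cancel (hγ.trans hδ.symm)
  apply exponent_injective
  rw [← Finsupp.cons_tail (exponent γ), ← Finsupp.cons_tail (exponent δ), hhead]
  exact congrArg _ h

theorem range_tailExponent :
    Set.range (tailExponent : Comp n (m + 1) → Fin m →₀ ℕ) = {c | c.degree ≤ n} := by
  refine Set.Subset.antisymm (Set.range_subset_iff.2 fun γ ↦ ?_) fun c (hc : c.degree ≤ n) ↦ ?_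
  · exact (Nat.le_add_left _ _).trans_eq (head_add_degree_tailExponent γ)
  · have hcons : Finsupp.cons (n - c.degree) c ∈ {c : Fin (m + 1) →₀ ℕ | c.degree = n} := by
      rw [Set.mem_ofPred_eq, Finsupp.degree_eq_sum, Fin.sum_univ_succ, Finsupp.cons_zero]
      simp only [Finsupp.cons_succ, ← Finsupp.degree_eq_sum]
      exact Nat.sub_add_cancel hc
    obtain ⟨γ, hγ⟩ := range_exponent.superset hcons
    exact ⟨γ, by rw [tailExponent, hγ, Finsupp.tail_cons]⟩

theorem isLowerSet_range_tailExponent :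
    IsLowerSet (Set.range (tailExponent : Comp n (m + 1) → Fin m →₀ ℕ)) := by
  rw [range_tailExponent]
  exact fun c d hdc hc ↦ (Finsupp.degree_mono hdc).trans hc

theorem card_filter_le_part (i : Fin (m + 1)) {t : ℕ} (ht : t ≤ n) :
    #{γ : Comp n (m + 1) | t ≤ γ.1 i} = (n - t + m).choose m := by
  have himage : ({γ | t ≤ γ.1 i} : Finset (Comp n (m + 1))).map ⟨exponent, exponent_injective⟩ =
      (univ.finsuppAntidiag (n - t)).map (addRightEmbedding (Finsupp.single i t)) := by
    ext c
    simp only [mem_map, mem_filter_univ, mem_finsuppAntidiag', Function.Embedding.coeFn_mk,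
      addRightEmbedding_apply]
    constructor
    · rintro ⟨γ, hγ, rfl⟩
      have hle : Finsupp.single i t ≤ exponent γ := Finsupp.single_le_iff.2 hγ
      refine ⟨exponent γ - Finsupp.single i t, ⟨?_, subset_univ _⟩, tsub_add_cancel_of_le hle⟩
      have := congrArg Finsupp.degree (tsub_add_cancel_of_le hle)
      rw [map_add, degree_exponent, Finsupp.degree_single] at this
      exact Nat.eq_sub_of_add_eq this
    · rintro ⟨d, ⟨hd, -⟩, rfl⟩
      have hdegree : d + Finsupp.single i t ∈ {c : Fin (m + 1) →₀ ℕ | c.degree = n} := by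
        rw [Set.mem_ofPred_eq, map_add, Finsupp.degree_single]
        exact (congrArg (· + t) hd).trans (Nat.sub_add_cancel ht)
      obtain ⟨γ, hγ⟩ := range_exponent.superset hdegree
      refine ⟨γ, ?_, hγ⟩
      rw [← exponent_apply, hγ]
      simp
  rw [← card_map, himage, card_map, card_finsuppAntidiag_nat_eq_choose, card_univ,
    Fintype.card_fin, ← Nat.choose_symm_add]
  congr 1
  omega

theorem prod_prod_Icc_part {M : Type*} [CommMonoid M] (i : Fin (m + 1)) (f : ℕ → M) :
    ∏ γ : Comp n (m + 1), ∏ t ∈ Icc 1 (γ.1 i : ℕ), f t =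
      ∏ t ∈ Icc 1 n, f t ^ (n - t + m).choose m := by
  have hmem (γ : Comp n (m + 1)) (t : ℕ) :
      γ ∈ univ ∧ t ∈ Icc 1 (γ.1 i : ℕ) ↔
        γ ∈ ({γ | t ≤ γ.1 i} : Finset (Comp n (m + 1))) ∧ t ∈ Icc 1 n := by
    have := (γ.1 i).is_le
    simp only [mem_univ, mem_filter_univ, mem_Icc, true_and]
    omega
  rw [prod_comm' hmem]
  refine prod_congr rfl fun t ht ↦ ?_
  rw [prod_const, card_filter_le_part i (mem_Icc.1 ht).2]

theorem prod_pow_part {M : Type*} [CommMonoid M] (i : Fin (m + 1)) (s : M) :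
    ∏ γ : Comp n (m + 1), s ^ (γ.1 i : ℕ) = s ^ (n + m).choose (m + 1) := by
  have hockey : ∑ t ∈ Icc 1 n, (n - t + m).choose m = (n + m).choose (m + 1) := by
    rw [sum_Icc_sub_eq_sum_range fun j ↦ (j + m).choose m]
    obtain _ | n := n
    · simp
    · rw [Nat.sum_range_add_choose, Nat.add_right_comm]
  simpa [prod_pow_eq_pow_sum, hockey] using prod_prod_Icc_part (n := n) i fun _ ↦ s

end Comp

section Determinant

variable {n m : ℕ} {R : Type*} [CommRing R]

theorem det_monomial_eq_pow_mul_det_tail {y : Comp n (m + 1) → Fin (m + 1) → R} {s : R}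
    (hy : ∀ α, ∑ i, y α i = s) :
    (Matrix.of fun α β : Comp n (m + 1) ↦ ∏ i, y α i ^ (β.1 i : ℕ)).det =
      s ^ (n + m).choose (m + 1) *
        (Matrix.of fun α β : Comp n (m + 1) ↦ ∏ i : Fin m, y α i.succ ^ (β.1 i.succ : ℕ)).det := by
  rw [← Comp.prod_pow_part 0, ← Matrix.det_mul_row]
  simpa [hy] using
    det_monomial_eq_det_monomial_sum_first Comp.exponent_injective Comp.range_exponent y

theorem prod_range_arithmetic_sub (x l : R) (b : ℕ) :
    ∏ j ∈ range b, (x + l * b - (x + l * j)) = ∏ t ∈ Icc 1 b, (l * t) := by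
  rw [← prod_Icc_sub_eq_prod_range fun j : ℕ ↦ x + l * b - (x + l * j)]
  refine prod_congr rfl fun t ht ↦ ?_
  rw [Nat.cast_sub (mem_Icc.1 ht).2]
  ring

theorem det_tail_arithmetic (x : Fin m → R) (l : R) :
    (Matrix.of fun α β : Comp n (m + 1) ↦
        ∏ i : Fin m, (x i + l * (α.1 i.succ : ℕ)) ^ (β.1 i.succ : ℕ)).det =
      l ^ (m * (n + m).choose (m + 1)) * ∏ t ∈ Icc 1 n, (t : R) ^ (m * (n - t + m).choose m) := by
  have hprod (i : Fin m) : ∏ β : Comp n (m + 1), ∏ j ∈ range (β.1 i.succ : ℕ),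
        (x i + l * (β.1 i.succ : ℕ) - (x i + l * j)) =
      l ^ (n + m).choose (m + 1) * ∏ t ∈ Icc 1 n, (t : R) ^ (n - t + m).choose m := by
    simp only [prod_range_arithmetic_sub, prod_mul_distrib, prod_const, Nat.card_Icc,
      add_tsub_cancel_right]
    rw [Comp.prod_pow_part i.succ l, Comp.prod_prod_Icc_part i.succ fun t ↦ (t : R)]
  calc _ = ∏ β : Comp n (m + 1), ∏ i : Fin m, ∏ j ∈ range (β.1 i.succ : ℕ),
        (x i + l * (β.1 i.succ : ℕ) - (x i + l * j)) :=
        det_vandermonde_of_isLowerSet Comp.tailExponent_injective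
          Comp.isLowerSet_range_tailExponent fun i j ↦ x i + l * j
    _ = _ := by
        rw [prod_comm]
        simp only [hprod, prod_const, card_univ, Fintype.card_fin, mul_pow, ← prod_pow, ← pow_mul,
          mul_comm m]

end Determinant

theorem stmt11_general {R : Type*} [CommRing R] (n k : ℕ) (hk : 0 < k) (x : Fin k → R) (l : R) :
    Matrix.det (Matrix.of fun α β : Comp n k =>
        ∏ i, (x i + l * ((α.1 i : ℕ) : R)) ^ ((β.1 i : ℕ))) =
      l ^ ((k - 1) * (n + k - 1).choose k) *
        ((∑ j, x j) + l * (n : R)) ^ ((n + k - 1).choose k) *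
        ∏ i ∈ Finset.Icc 1 n, (i : R) ^ ((k - 1) * (n + k - i - 1).choose (k - 1)) := by
  obtain ⟨m, rfl⟩ := Nat.exists_eq_add_one.2 hk
  have hsum (α : Comp n (m + 1)) : ∑ i, (x i + l * ((α.1 i : ℕ) : R)) = ∑ j, x j + l * n := by
    rw [sum_add_distrib, ← mul_sum, ← Nat.cast_sum, α.2]
  have hchoose : ∏ t ∈ Icc 1 n, (t : R) ^ (m * (n - t + m).choose m) =
      ∏ t ∈ Icc 1 n, (t : R) ^ (m * (n + (m + 1) - t - 1).choose m) :=
    prod_congr rfl fun t ht ↦ by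
      rw [show n + (m + 1) - t - 1 = n - t + m by have := (mem_Icc.1 ht).2; omega]
  rw [det_monomial_eq_pow_mul_det_tail hsum, det_tail_arithmetic fun i ↦ x i.succ, hchoose]
  simp only [add_tsub_cancel_right, ← add_assoc]
  ring

theorem stmt11 {F : Type*} [Field F] [CharZero F] (n k : ℕ) (hn : 0 < n) (hk : 0 < k)
    (x : Fin k → F) (l : F) :
    Matrix.det (Matrix.of fun α β : Comp n k =>
        ∏ i, (x i + l * ((α.1 i : ℕ) : F)) ^ ((β.1 i : ℕ))) =
      l ^ ((k - 1) * (n + k - 1).choose k) *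
        ((∑ j, x j) + l * (n : F)) ^ ((n + k - 1).choose k) *
        ∏ i ∈ Finset.Icc 1 n, (i : F) ^ ((k - 1) * (n + k - i - 1).choose (k - 1)) :=
  stmt11_general n k hk x l
end
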